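/- arXiv:1509.02803 — 3 statements merged into one kernel-verified Lean document; each statement's English description precedes it below -/
import Mathlib

section
/- Let σ, M > 0 and let f : ℝ → ℂ be bandlimited with parameters (σ, M). Then for all x, y ∈ ℝ with x ≠ y and σx ∉ πℤ, the following sampling representation of the divided difference holds: (f(x) − f(y))/(x − y) = Σ_{n∈ℤ} σ·((f(x) − f(πn/σ))/(σx − πn))·(sin(σy − πn)/(σy − πn)), where sin(t)/t is understood as 1 when t = 0, and the series converges absolutely. -/
/-- `sin t / t`, understood as `1` at `t = 0`. -/
noncomputable def sinc (t : ℝ) : ℝ := if t = 0 then 1 else Real.sin t / t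

/-!
The divided difference `g z = (F z - F x) / (z - x)` is entire, of the same exponential type as `F`,
and gains a factor `1 / (1 + ‖z‖)` of decay. For such a `g`, normalised to type `1`, the truncated
cardinal series `S_N z = ∑_{|n| ≤ N} g (n π) sinc (z - n π)` interpolates `g` at the zeros of `sin`
in the square of half-side `(N + 1/2) π`, so `(g - S_N) / sin` is holomorphic there. On the boundary
of that square `exp |im z| ≤ 4 ‖sin z‖`, which bounds the quotient by a multiple of the Cesàro mean
of `1, 1/2, …, 1/(N+1)`. By the maximum principle the bound holds inside, and the mean tends to `0`.
-/

section MaximumPrinciple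

open Complex Filter Topology

theorem exists_differentiableOn_eq_mul {f g : ℂ → ℂ} {V : Set ℂ} (hV : IsOpen V)
    (hf : DifferentiableOn ℂ f V) (hg : DifferentiableOn ℂ g V)
    (hzero : ∀ w ∈ V, g w = 0 → f w = 0 ∧ deriv g w ≠ 0) :
    ∃ q : ℂ → ℂ, DifferentiableOn ℂ q V ∧ ∀ z ∈ V, f z = g z * q z := by
  refine ⟨fun z ↦ if g z = 0 then deriv f z / deriv g z else f z / g z,
    fun w hw ↦ ?_, fun z hz ↦ ?_⟩
  · have hVw : V ∈ 𝓝 w := hV.mem_nhds hw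
    refine DifferentiableAt.differentiableWithinAt ?_
    by_cases hgw : g w = 0
    · obtain ⟨hfw, hderiv⟩ := hzero w hw hgw
      have slope_f : DifferentiableAt ℂ (dslope f w) w :=
        ((differentiableOn_dslope hVw).2 hf).differentiableAt hVw
      have slope_g : DifferentiableAt ℂ (dslope g w) w :=
        ((differentiableOn_dslope hVw).2 hg).differentiableAt hVw
      have slope_g_ne : dslope g w w ≠ 0 := by rwa [dslope_same]
      refine (slope_f.div slope_g slope_g_ne).congr_of_eventuallyEq ?_
      filter_upwards [slope_g.continuousAt.eventually_ne slope_g_ne] with z hz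
      rcases eq_or_ne z w with rfl | hzw
      · simp [hgw]
      · have hzw' : z - w ≠ 0 := sub_ne_zero.2 hzw
        have hgz : g z = (z - w) * dslope g w z := by
          simpa [hgw] using (sub_smul_dslope g w z).symm
        have hfz : f z = (z - w) * dslope f w z := by
          simpa [hfw] using (sub_smul_dslope f w z).symm
        rw [if_neg (hgz ▸ mul_ne_zero hzw' hz), Pi.div_apply, hfz, hgz, mul_div_mul_left _ _ hzw']
    · have hfw := hf.differentiableAt hVw
      have hgw' := hg.differentiableAt hVw
      refine (hfw.div hgw' hgw).congr_of_eventuallyEq ?_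
      filter_upwards [hgw'.continuousAt.eventually_ne hgw] with z hz
      rw [if_neg hz, Pi.div_apply]
  · by_cases hgz : g z = 0
    · rw [(hzero z hz hgz).1, hgz, zero_mul]
    · simp only [if_neg hgz, mul_div_cancel₀ _ hgz]

theorem norm_le_mul_norm_of_forall_mem_frontier {f g : ℂ → ℂ} {U V : Set ℂ} {C : ℝ}
    (hU : Bornology.IsBounded U) (hV : IsOpen V) (hUV : closure U ⊆ V)
    (hf : DifferentiableOn ℂ f V) (hg : DifferentiableOn ℂ g V)
    (hzero : ∀ w ∈ V, g w = 0 → f w = 0 ∧ deriv g w ≠ 0)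
    (hg_ne : ∀ z ∈ frontier U, g z ≠ 0) (hle : ∀ z ∈ frontier U, ‖f z‖ ≤ C * ‖g z‖)
    {w : ℂ} (hw : w ∈ closure U) :
    ‖f w‖ ≤ C * ‖g w‖ := by
  obtain ⟨q, hq, hfq⟩ := exists_differentiableOn_eq_mul hV hf hg hzero
  have frontier_le : ∀ z ∈ frontier U, ‖q z‖ ≤ C := fun z hz ↦ by
    have h := hle z hz
    rw [hfq z (hUV (frontier_subset_closure hz)), norm_mul, mul_comm] at h
    exact le_of_mul_le_mul_right h (norm_pos_iff.2 (hg_ne z hz))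
  have hqw : ‖q w‖ ≤ C :=
    norm_le_of_forall_mem_frontier_norm_le hU (hq.mono hUV).diffContOnCl frontier_le hw
  rw [hfq w (hUV hw), norm_mul, mul_comm]
  gcongr

theorem abs_re_eq_or_abs_im_eq_of_mem_frontier {R : ℝ} (hR : 0 < R) {z : ℂ}
    (hz : z ∈ frontier (Set.Ioo (-R) R ×ℂ Set.Ioo (-R) R)) : |z.re| = R ∨ |z.im| = R := by
  have hlt : -R < R := by linarith
  rw [frontier_reProdIm, closure_Ioo hlt.ne, frontier_Ioo hlt] at hz
  rcases hz with ⟨-, him⟩ | ⟨hre, -⟩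
  · exact Or.inr ((abs_eq hR.le).2 (Or.symm him))
  · exact Or.inl ((abs_eq hR.le).2 (Or.symm hre))

end MaximumPrinciple

section Sine

open Complex

theorem norm_sin_sq (z : ℂ) : ‖sin z‖ ^ 2 = Real.sin z.re ^ 2 + Real.sinh z.im ^ 2 := by
  have re_im : sin z = ⟨Real.sin z.re * Real.cosh z.im, Real.cos z.re * Real.sinh z.im⟩ := by
    rw [sin_eq, mk_eq_add_mul_I]
    push_cast
    rfl
  rw [← normSq_eq_norm_sq, re_im, normSq_mk]
  linear_combination Real.sin z.re ^ 2 * Real.cosh_sq z.im +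
    Real.sinh z.im ^ 2 * Real.sin_sq_add_cos_sq z.re

theorem exp_abs_im_le_four_mul_norm_sin_of_cos_re_eq_zero {z : ℂ} (hz : Real.cos z.re = 0) :
    Real.exp |z.im| ≤ 4 * ‖sin z‖ := by
  have norm_eq : ‖sin z‖ = Real.cosh z.im := by
    refine (sq_eq_sq₀ (norm_nonneg _) (Real.cosh_pos _).le).1 ?_
    rw [norm_sin_sq, Real.sin_sq, hz, Real.cosh_sq]
    ring
  rw [norm_eq, ← Real.cosh_abs, Real.cosh_eq]
  linarith [Real.exp_pos |z.im|, Real.exp_pos (-|z.im|)]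

theorem exp_abs_im_le_four_mul_norm_sin_of_one_le_abs_im {z : ℂ} (hz : 1 ≤ |z.im|) :
    Real.exp |z.im| ≤ 4 * ‖sin z‖ := by
  have sinh_le : Real.sinh |z.im| ≤ ‖sin z‖ := by
    rw [← Real.abs_sinh]
    refine abs_le_of_sq_le_sq ?_ (norm_nonneg _)
    linarith [norm_sin_sq z, sq_nonneg (Real.sin z.re)]
  have two_le : 2 ≤ Real.exp |z.im| := by linarith [Real.add_one_le_exp |z.im|]
  have le_one : Real.exp (-|z.im|) ≤ 1 := Real.exp_le_one_iff.2 (by linarith)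
  rw [Real.sinh_eq] at sinh_le
  linarith

theorem exp_abs_im_le_four_mul_norm_sin_of_abs_eq (N : ℕ) {z : ℂ}
    (hz : |z.re| = (N + 1 / 2) * Real.pi ∨ |z.im| = (N + 1 / 2) * Real.pi) :
    Real.exp |z.im| ≤ 4 * ‖sin z‖ := by
  rcases hz with hre | him
  · refine exp_abs_im_le_four_mul_norm_sin_of_cos_re_eq_zero ?_
    rw [← Real.cos_abs, hre, Real.cos_eq_zero_iff]
    exact ⟨N, by push_cast; ring⟩
  · refine exp_abs_im_le_four_mul_norm_sin_of_one_le_abs_im ?_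
    rw [him]
    nlinarith [Real.pi_gt_three, N.cast_nonneg (α := ℝ)]

theorem deriv_sin_ne_zero_of_sin_eq_zero {z : ℂ} (hz : sin z = 0) : deriv sin z ≠ 0 := by
  rw [Complex.deriv_sin]
  exact fun hcos ↦ by simpa [hz, hcos] using sin_sq_add_cos_sq z

end Sine

section CardinalSine

open Complex

theorem differentiable_dslope {f : ℂ → ℂ} (hf : Differentiable ℂ f) (a : ℂ) :
    Differentiable ℂ (dslope f a) :=
  differentiableOn_univ.1 ((differentiableOn_dslope Filter.univ_mem).2 hf.differentiableOn)

/-- The entire function `sin z / z`. Writing it as a `dslope` makes it holomorphic at `0`, where it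
takes the value `1`. -/
noncomputable def csinc : ℂ → ℂ := dslope sin 0

theorem differentiable_csinc : Differentiable ℂ csinc := differentiable_dslope differentiable_sin 0

@[simp]
theorem csinc_zero : csinc 0 = 1 := by simp [csinc]

theorem mul_csinc (z : ℂ) : z * csinc z = sin z := by
  simpa [csinc] using sub_smul_dslope sin 0 z

theorem csinc_ofReal (t : ℝ) : csinc t = sinc t := by
  rcases eq_or_ne t 0 with rfl | ht
  · simp [sinc]
  · rw [sinc, if_neg ht, ofReal_div, ofReal_sin, ← mul_csinc,
      mul_div_cancel_left₀ _ (ofReal_ne_zero.2 ht)]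

theorem csinc_int_mul_pi {n : ℤ} (hn : n ≠ 0) : csinc (n * Real.pi) = 0 := by
  have h := mul_csinc (n * Real.pi)
  rw [sin_int_mul_pi] at h
  exact (mul_eq_zero.1 h).resolve_left
    (mul_ne_zero (Int.cast_ne_zero.2 hn) (ofReal_ne_zero.2 Real.pi_ne_zero))

theorem norm_mul_norm_csinc_sub_int_mul_pi (z : ℂ) (n : ℤ) :
    ‖z - n * Real.pi‖ * ‖csinc (z - n * Real.pi)‖ = ‖sin z‖ := by
  rw [← norm_mul, mul_csinc, sin_antiperiodic.sub_int_mul_eq, norm_mul]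
  simp

theorem norm_int_mul_pi (n : ℤ) : ‖(n * Real.pi : ℂ)‖ = |(n : ℝ)| * Real.pi := by
  rw [norm_mul, norm_intCast, norm_real, Real.norm_of_nonneg Real.pi_pos.le]

end CardinalSine

section HarmonicMean

open Filter Topology

/-- The Cesàro mean of `1, 1/2, …, 1/N`. -/
noncomputable def harmonicMean (N : ℕ) : ℝ := (N : ℝ)⁻¹ * ∑ j ∈ Finset.range N, 1 / ((j : ℝ) + 1)

theorem tendsto_harmonicMean : Tendsto harmonicMean atTop (𝓝 0) :=
  tendsto_one_div_add_atTop_nhds_zero_nat.cesaro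

theorem inv_le_harmonicMean (N : ℕ) : ((N : ℝ) + 1)⁻¹ ≤ harmonicMean (N + 1) := by
  have one_le_sum : 1 ≤ ∑ j ∈ Finset.range (N + 1), 1 / ((j : ℝ) + 1) := by
    simpa using Finset.single_le_sum (f := fun j : ℕ ↦ 1 / ((j : ℝ) + 1))
      (fun j _ ↦ by positivity) (Finset.mem_range.2 N.succ_pos)
  rw [harmonicMean, Nat.cast_add_one]
  exact le_mul_of_one_le_right (by positivity) one_le_sum

theorem one_div_mul_le_of_le {j N : ℕ} (hj : j ≤ N) :
    1 / (((j : ℝ) + 1) * (N + 1 - j)) ≤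
      ((N : ℝ) + 1)⁻¹ * (1 / ((j : ℝ) + 1) + 1 / ((N : ℝ) + 1 - j)) := by
  have hj' : (j : ℝ) ≤ N := Nat.cast_le.2 hj
  have hpos : (0 : ℝ) < N + 1 - j := by linarith
  have partial_fractions : 1 / ((j : ℝ) + 1) + 1 / ((N : ℝ) + 1 - j) =
      (N + 2) * (1 / (((j : ℝ) + 1) * (N + 1 - j))) := by
    field_simp
    ring
  rw [partial_fractions, ← mul_assoc]
  refine le_mul_of_one_le_left (by positivity) ?_
  rw [inv_mul_eq_div, one_le_div (by positivity)]
  linarith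

theorem sum_range_one_div_mul_le (N : ℕ) :
    ∑ j ∈ Finset.range (N + 1), 1 / (((j : ℝ) + 1) * (N + 1 - j)) ≤ 2 * harmonicMean (N + 1) := by
  have reflect : ∑ j ∈ Finset.range (N + 1), 1 / ((N : ℝ) + 1 - j) =
      ∑ j ∈ Finset.range (N + 1), 1 / ((j : ℝ) + 1) := by
    rw [← Finset.sum_range_reflect]
    refine Finset.sum_congr rfl fun j hj ↦ ?_
    rw [Nat.add_sub_cancel, Nat.cast_sub (Finset.mem_range_succ_iff.1 hj)]
    ring
  calc _ ≤ ∑ j ∈ Finset.range (N + 1),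
        ((N : ℝ) + 1)⁻¹ * (1 / ((j : ℝ) + 1) + 1 / ((N : ℝ) + 1 - j)) :=
        Finset.sum_le_sum fun j hj ↦ one_div_mul_le_of_le (Finset.mem_range_succ_iff.1 hj)
    _ = 2 * harmonicMean (N + 1) := by
        rw [← Finset.mul_sum, Finset.sum_add_distrib, reflect, harmonicMean, Nat.cast_add_one]
        ring

theorem sum_Icc_one_div_mul_le (N : ℕ) :
    ∑ n ∈ Finset.Icc (-(N : ℤ)) N, 1 / ((|(n : ℝ)| + 1) * (N + 1 - |(n : ℝ)|)) ≤
      4 * harmonicMean (N + 1) := by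
  rw [Finset.sum_Icc_of_even_eq_range
    (f := fun n : ℤ ↦ 1 / ((|(n : ℝ)| + 1) * (N + 1 - |(n : ℝ)|))) fun n ↦ by simp]
  simp only [Int.cast_natCast, Nat.abs_cast, Int.cast_zero, abs_zero, two_nsmul, zero_add, sub_zero,
    one_mul]
  have zero_term_nonneg : 0 ≤ 1 / ((N : ℝ) + 1) := by positivity
  linarith [sum_range_one_div_mul_le N]

end HarmonicMean

section CardinalSeries

open Complex Filter Topology

/-- The truncation of the cardinal series of `g` to the nodes `n π` with `|n| ≤ N`. -/
noncomputable def cardinalSum (g : ℂ → ℂ) (N : ℕ) (z : ℂ) : ℂ :=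
  ∑ n ∈ Finset.Icc (-(N : ℤ)) N, g (n * Real.pi) * csinc (z - n * Real.pi)

theorem differentiable_cardinalSum (g : ℂ → ℂ) (N : ℕ) : Differentiable ℂ (cardinalSum g N) :=
  Differentiable.fun_sum fun _ _ ↦
    (differentiable_csinc.comp (differentiable_id.sub_const _)).const_mul _

theorem cardinalSum_int_mul_pi (g : ℂ → ℂ) {N : ℕ} {m : ℤ} (hm : m ∈ Finset.Icc (-(N : ℤ)) N) :
    cardinalSum g N (m * Real.pi) = g (m * Real.pi) := by
  rw [cardinalSum, Finset.sum_eq_single_of_mem m hm]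
  · rw [sub_self, csinc_zero, mul_one]
  · intro n _ hnm
    rw [← sub_mul, ← Int.cast_sub, csinc_int_mul_pi (sub_ne_zero.2 hnm.symm), mul_zero]

variable {g : ℂ → ℂ} {C : ℝ}

theorem nonneg_of_norm_mul_le (hC : ∀ z, ‖g z‖ * (1 + ‖z‖) ≤ C * Real.exp |z.im|) : 0 ≤ C := by
  have h : ‖g 0‖ ≤ C := by simpa using hC 0
  exact (norm_nonneg _).trans h

theorem norm_apply_int_mul_pi_le (hC : ∀ z, ‖g z‖ * (1 + ‖z‖) ≤ C * Real.exp |z.im|) (n : ℤ) :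
    ‖g (n * Real.pi)‖ ≤ C / (|(n : ℝ)| + 1) := by
  have h := hC (n * Real.pi)
  have him : (n * Real.pi : ℂ).im = 0 := by simp
  rw [norm_int_mul_pi, him, abs_zero, Real.exp_zero, mul_one] at h
  rw [le_div_iff₀ (by positivity)]
  refine (mul_le_mul_of_nonneg_left ?_ (norm_nonneg _)).trans h
  nlinarith [Real.pi_gt_three, abs_nonneg (n : ℝ)]

theorem norm_cardinalSum_le (hC : ∀ z, ‖g z‖ * (1 + ‖z‖) ≤ C * Real.exp |z.im|) {N : ℕ} {z : ℂ}
    (hz : (N + 1 / 2) * Real.pi ≤ ‖z‖) :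
    ‖cardinalSum g N z‖ ≤ C * (4 * harmonicMean (N + 1)) * ‖sin z‖ := by
  have hC0 := nonneg_of_norm_mul_le hC
  have term_le : ∀ n ∈ Finset.Icc (-(N : ℤ)) N, ‖g (n * Real.pi) * csinc (z - n * Real.pi)‖ ≤
      C * (1 / ((|(n : ℝ)| + 1) * (N + 1 - |(n : ℝ)|))) * ‖sin z‖ := by
    intro n hn
    have hnN : |(n : ℝ)| ≤ N := by
      rw [← Int.cast_abs]
      exact_mod_cast abs_le.2 (Finset.mem_Icc.1 hn)
    have hgap : 0 < (N : ℝ) + 1 - |(n : ℝ)| := by linarith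
    have dist_ge : (N : ℝ) + 1 - |(n : ℝ)| ≤ ‖z - n * Real.pi‖ := by
      have h := norm_sub_norm_le z (n * Real.pi)
      rw [norm_int_mul_pi] at h
      nlinarith [Real.pi_gt_three]
    have csinc_le : ‖csinc (z - n * Real.pi)‖ ≤ ‖sin z‖ / (N + 1 - |(n : ℝ)|) := by
      rw [le_div_iff₀' hgap, ← norm_mul_norm_csinc_sub_int_mul_pi z n]
      gcongr
    calc _ ≤ C / (|(n : ℝ)| + 1) * (‖sin z‖ / (N + 1 - |(n : ℝ)|)) := by
          rw [norm_mul]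
          gcongr
          exact norm_apply_int_mul_pi_le hC n
      _ = _ := by field_simp
  calc ‖cardinalSum g N z‖ ≤ _ := norm_sum_le_of_le _ term_le
    _ = C * (∑ n ∈ Finset.Icc (-(N : ℤ)) N, 1 / ((|(n : ℝ)| + 1) * (N + 1 - |(n : ℝ)|))) *
        ‖sin z‖ := by rw [Finset.mul_sum, Finset.sum_mul]
    _ ≤ _ := by gcongr; exact sum_Icc_one_div_mul_le N

theorem norm_sub_cardinalSum_le_of_abs_eq
    (hC : ∀ z, ‖g z‖ * (1 + ‖z‖) ≤ C * Real.exp |z.im|) {N : ℕ} {z : ℂ}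
    (hz : |z.re| = (N + 1 / 2) * Real.pi ∨ |z.im| = (N + 1 / 2) * Real.pi) :
    ‖g z - cardinalSum g N z‖ ≤ 8 * C * harmonicMean (N + 1) * ‖sin z‖ := by
  have hC0 := nonneg_of_norm_mul_le hC
  have norm_ge : (N + 1 / 2) * Real.pi ≤ ‖z‖ := by
    rcases hz with h | h
    · exact h ▸ abs_re_le_norm z
    · exact h ▸ abs_im_le_norm z
  have N_le : (N : ℝ) + 1 ≤ 1 + ‖z‖ := by
    nlinarith [Real.pi_gt_three, N.cast_nonneg (α := ℝ)]
  have norm_g_le : ‖g z‖ ≤ C * (4 * harmonicMean (N + 1)) * ‖sin z‖ := calc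
    ‖g z‖ ≤ C * Real.exp |z.im| / (1 + ‖z‖) := (le_div_iff₀ (by positivity)).2 (hC z)
    _ ≤ C * (4 * ‖sin z‖) / (N + 1) := by
      gcongr
      exact exp_abs_im_le_four_mul_norm_sin_of_abs_eq N hz
    _ = C * (4 * ((N : ℝ) + 1)⁻¹) * ‖sin z‖ := by ring
    _ ≤ _ := by gcongr; exact inv_le_harmonicMean N
  linarith [norm_sub_le (g z) (cardinalSum g N z), norm_cardinalSum_le hC norm_ge]

theorem mem_Icc_of_abs_mul_pi_lt {m : ℤ} {N : ℕ} (h : |(m : ℝ) * Real.pi| < (N + 1) * Real.pi) :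
    m ∈ Finset.Icc (-(N : ℤ)) N := by
  rw [abs_mul, abs_of_pos Real.pi_pos, mul_lt_mul_iff_left₀ Real.pi_pos, ← Int.cast_abs] at h
  have hlt : |m| < N + 1 := by exact_mod_cast h
  exact Finset.mem_Icc.2 (abs_le.1 (Int.lt_add_one_iff.1 hlt))

theorem norm_sub_cardinalSum_le (hg : Differentiable ℂ g)
    (hC : ∀ z, ‖g z‖ * (1 + ‖z‖) ≤ C * Real.exp |z.im|) {N : ℕ} {w : ℂ} (hw : ‖w‖ ≤ N) :
    ‖g w - cardinalSum g N w‖ ≤ 8 * C * harmonicMean (N + 1) * ‖sin w‖ := by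
  set R : ℝ := (N + 1 / 2) * Real.pi with hR
  have hR0 : 0 < R := by positivity
  have hN_le : (N : ℝ) ≤ R := by nlinarith [Real.pi_gt_three, N.cast_nonneg (α := ℝ)]
  have closure_eq : closure (Set.Ioo (-R) R ×ℂ Set.Ioo (-R) R) =
      Set.Icc (-R) R ×ℂ Set.Icc (-R) R := by
    rw [closure_reProdIm, closure_Ioo (by linarith)]
  refine norm_le_mul_norm_of_forall_mem_frontier (f := fun z ↦ g z - cardinalSum g N z)
    (U := Set.Ioo (-R) R ×ℂ Set.Ioo (-R) R) (V := {z | |z.re| < (N + 1) * Real.pi})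
    ((Metric.isBounded_Ioo _ _).reProdIm (Metric.isBounded_Ioo _ _))
    (isOpen_lt (by fun_prop) continuous_const) ?_
    (hg.sub (differentiable_cardinalSum g N)).differentiableOn differentiable_sin.differentiableOn
    ?_ ?_ ?_ ?_
  · rw [closure_eq]
    intro z hz
    have hre : |z.re| ≤ R := abs_le.2 hz.1
    change |z.re| < (N + 1) * Real.pi
    nlinarith [Real.pi_pos]
  · intro z hz hsin
    refine ⟨?_, deriv_sin_ne_zero_of_sin_eq_zero hsin⟩
    obtain ⟨m, rfl⟩ := sin_eq_zero_iff.1 hsin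
    have hm : |(m : ℝ) * Real.pi| < (N + 1) * Real.pi := by simpa using hz
    exact sub_eq_zero.2 (cardinalSum_int_mul_pi g (mem_Icc_of_abs_mul_pi_lt hm)).symm
  · intro z hz hsin
    have h := exp_abs_im_le_four_mul_norm_sin_of_abs_eq N
      (abs_re_eq_or_abs_im_eq_of_mem_frontier hR0 hz)
    rw [hsin, norm_zero, mul_zero] at h
    exact h.not_gt (Real.exp_pos _)
  · exact fun z hz ↦
      norm_sub_cardinalSum_le_of_abs_eq hC (abs_re_eq_or_abs_im_eq_of_mem_frontier hR0 hz)
  · rw [closure_eq]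
    exact ⟨abs_le.1 (((abs_re_le_norm w).trans hw).trans hN_le),
      abs_le.1 (((abs_im_le_norm w).trans hw).trans hN_le)⟩

theorem tendsto_cardinalSum (hg : Differentiable ℂ g)
    (hC : ∀ z, ‖g z‖ * (1 + ‖z‖) ≤ C * Real.exp |z.im|) (w : ℂ) :
    Tendsto (fun N ↦ cardinalSum g N w) atTop (𝓝 (g w)) := by
  have bound_tendsto : Tendsto (fun N ↦ 8 * C * harmonicMean (N + 1) * ‖sin w‖) atTop (𝓝 0) := by
    simpa using ((tendsto_harmonicMean.comp (tendsto_add_atTop_nat 1)).const_mul (8 * C)).mul_const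
      ‖sin w‖
  rw [tendsto_iff_norm_sub_tendsto_zero]
  refine squeeze_zero' (.of_forall fun _ ↦ norm_nonneg _) ?_ bound_tendsto
  filter_upwards [eventually_ge_atTop ⌈‖w‖⌉₊] with N hN
  rw [norm_sub_rev]
  exact norm_sub_cardinalSum_le hg hC (Nat.ceil_le.1 hN)

theorem summable_norm_cardinal (hC : ∀ z, ‖g z‖ * (1 + ‖z‖) ≤ C * Real.exp |z.im|) (w : ℂ) :
    Summable fun n : ℤ ↦ ‖g (n * Real.pi) * csinc (w - n * Real.pi)‖ := by
  have hC0 := nonneg_of_norm_mul_le hC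
  have majorant : Summable fun n : ℤ ↦ C * ‖sin w‖ * (1 / (n : ℝ) ^ 2) :=
    (Real.summable_one_div_int_pow.2 one_lt_two).mul_left _
  have eventually_large : ∀ᶠ n : ℤ in cofinite, max ‖w‖ 1 ≤ ‖(n : ℝ)‖ :=
    (tendsto_norm_cocompact_atTop.comp Int.tendsto_coe_cofinite).eventually_ge_atTop _
  refine majorant.of_norm_bounded_eventually ?_
  filter_upwards [eventually_large] with n hn
  rw [Real.norm_eq_abs, max_le_iff] at hn
  have hn0 : 0 < |(n : ℝ)| := by linarith [hn.2]
  have dist_ge : |(n : ℝ)| ≤ ‖w - n * Real.pi‖ := by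
    have h := norm_sub_norm_le (n * Real.pi : ℂ) w
    rw [norm_sub_rev, norm_int_mul_pi] at h
    nlinarith [Real.pi_gt_three]
  have csinc_le : ‖csinc (w - n * Real.pi)‖ ≤ ‖sin w‖ / |(n : ℝ)| := by
    rw [le_div_iff₀' hn0, ← norm_mul_norm_csinc_sub_int_mul_pi w n]
    gcongr
  calc _ ≤ C / |(n : ℝ)| * (‖sin w‖ / |(n : ℝ)|) := by
        rw [norm_norm, norm_mul]
        gcongr
        refine (norm_apply_int_mul_pi_le hC n).trans ?_
        gcongr
        linarith
    _ = C * ‖sin w‖ * (1 / (n : ℝ) ^ 2) := by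
        rw [← sq_abs (n : ℝ)]
        ring

theorem hasSum_cardinal (hg : Differentiable ℂ g)
    (hC : ∀ z, ‖g z‖ * (1 + ‖z‖) ≤ C * Real.exp |z.im|) (w : ℂ) :
    HasSum (fun n : ℤ ↦ g (n * Real.pi) * csinc (w - n * Real.pi)) (g w) := by
  have hsum := (summable_norm_cardinal hC w).of_norm.hasSum
  have hlim := tendsto_nhds_unique (hsum.comp (Finset.tendsto_Icc_neg (R := ℤ)))
    (tendsto_cardinalSum hg hC w)
  rwa [hlim] at hsum

end CardinalSeries

section DividedDifference

open Complex

theorem exists_norm_dslope_mul_le {G : ℂ → ℂ} {M : ℝ} (hG : Differentiable ℂ G)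
    (hM : ∀ z, ‖G z‖ ≤ M * Real.exp |z.im|) (a : ℂ) :
    ∃ C : ℝ, ∀ z, ‖dslope G a z‖ * (1 + ‖z‖) ≤ C * Real.exp |z.im| := by
  have hcont : Continuous fun z ↦ ‖dslope G a z‖ * (1 + ‖z‖) :=
    (differentiable_dslope hG a).continuous.norm.mul (continuous_const.add continuous_norm)
  obtain ⟨B, hB⟩ := (isCompact_closedBall a 1).bddAbove_image hcont.continuousOn
  refine ⟨max B ((M + ‖G a‖) * (2 + ‖a‖)), fun z ↦ ?_⟩
  have one_le_exp : 1 ≤ Real.exp |z.im| := Real.one_le_exp (abs_nonneg _)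
  by_cases hz : z ∈ Metric.closedBall a 1
  · have hle : ‖dslope G a z‖ * (1 + ‖z‖) ≤ max B ((M + ‖G a‖) * (2 + ‖a‖)) :=
      (hB ⟨z, hz, rfl⟩).trans (le_max_left _ _)
    exact hle.trans (le_mul_of_one_le_right (le_trans (by positivity) hle) one_le_exp)
  · rw [mem_closedBall_iff_norm, not_le] at hz
    have norm_le : 1 + ‖z‖ ≤ ‖z - a‖ * (2 + ‖a‖) := by
      nlinarith [norm_le_norm_sub_add z a, norm_nonneg a]
    have sub_le : ‖G z - G a‖ ≤ (M + ‖G a‖) * Real.exp |z.im| := by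
      nlinarith [norm_sub_le (G z) (G a), hM z, norm_nonneg (G a)]
    calc ‖dslope G a z‖ * (1 + ‖z‖) ≤ ‖dslope G a z‖ * (‖z - a‖ * (2 + ‖a‖)) := by gcongr
      _ = ‖G z - G a‖ * (2 + ‖a‖) := by
          rw [← sub_smul_dslope G a z, norm_smul]
          ring
      _ ≤ (M + ‖G a‖) * Real.exp |z.im| * (2 + ‖a‖) := by gcongr
      _ = (M + ‖G a‖) * (2 + ‖a‖) * Real.exp |z.im| := by ring
      _ ≤ _ := by gcongr; exact le_max_right _ _

theorem dslope_eq_sub_div_sub {G : ℂ → ℂ} {a z : ℂ} (h : a ≠ z) :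
    dslope G a z = (G a - G z) / (a - z) := by
  rw [dslope_of_ne _ h.symm, slope_def_field, ← neg_sub (G a), ← neg_sub a, neg_div_neg_eq]

theorem norm_comp_div_ofReal_le {σ M : ℝ} (hσ : 0 < σ) {F : ℂ → ℂ}
    (hM : ∀ z, ‖F z‖ ≤ M * Real.exp (σ * |z.im|)) (z : ℂ) :
    ‖F (z / σ)‖ ≤ M * Real.exp |z.im| := by
  have h := hM (z / σ)
  rwa [div_ofReal_im, abs_div, abs_of_pos hσ, mul_div_cancel₀ _ hσ.ne'] at h

theorem divided_difference_sampling_general {σ M : ℝ} (hσ : 0 < σ) {F : ℂ → ℂ}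
    (hF : Differentiable ℂ F) (hM : ∀ z, ‖F z‖ ≤ M * Real.exp (σ * |z.im|)) {x y : ℂ}
    (hxy : x ≠ y) (hx : ∀ n : ℤ, σ * x ≠ Real.pi * n) :
    (Summable fun n : ℤ ↦ ‖σ * ((F x - F (Real.pi * n / σ)) / (σ * x - Real.pi * n)) *
      csinc (σ * y - Real.pi * n)‖) ∧
    ∑' n : ℤ, σ * ((F x - F (Real.pi * n / σ)) / (σ * x - Real.pi * n)) *
      csinc (σ * y - Real.pi * n) = (F x - F y) / (x - y) := by
  have hσ' : (σ : ℂ) ≠ 0 := ofReal_ne_zero.2 hσ.ne'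
  set G : ℂ → ℂ := fun z ↦ F (z / σ)
  have hG : Differentiable ℂ G := hF.comp (differentiable_id.div_const _)
  have G_mul (z : ℂ) : G (σ * z) = F z := congrArg F (mul_div_cancel_left₀ z hσ')
  obtain ⟨C, hC⟩ := exists_norm_dslope_mul_le hG (norm_comp_div_ofReal_le hσ hM) (σ * x)
  have term_eq (n : ℤ) : σ * ((F x - F (Real.pi * n / σ)) / (σ * x - Real.pi * n)) *
      csinc (σ * y - Real.pi * n) =
      σ * (dslope G (σ * x) (n * Real.pi) * csinc (σ * y - n * Real.pi)) := by
    rw [mul_comm (n : ℂ), dslope_eq_sub_div_sub (hx n), G_mul, mul_assoc]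
  have sum_eq : σ * dslope G (σ * x) (σ * y) = (F x - F y) / (x - y) := by
    rw [dslope_eq_sub_div_sub fun h ↦ hxy (mul_left_cancel₀ hσ' h), G_mul, G_mul, ← mul_sub,
      mul_div_assoc', mul_div_mul_left _ _ hσ']
  simp only [term_eq, ← sum_eq, norm_mul (σ : ℂ)]
  exact ⟨(summable_norm_cardinal hC _).mul_left _,
    ((hasSum_cardinal (differentiable_dslope hG _) hC _).mul_left _).tsum_eq⟩

end DividedDifference

/-- Sampling representation of the divided difference of a bandlimited function
(`f` is the restriction to `ℝ` of an entire `F` with `|F z| ≤ M·exp(σ|Im z|)`):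
for `x ≠ y` with `σx ∉ πℤ`,
`(f(x)−f(y))/(x−y) = Σ_{n∈ℤ} σ·((f(x)−f(πn/σ))/(σx−πn))·sinc(σy−πn)`,
with absolute convergence. -/
theorem divided_difference_sampling
    (σ M : ℝ) (hσ : 0 < σ) (hM : 0 < M)
    (f : ℝ → ℂ) (F : ℂ → ℂ) (hF : Differentiable ℂ F)
    (hFbound : ∀ z : ℂ, ‖F z‖ ≤ M * Real.exp (σ * |z.im|))
    (hfF : ∀ x : ℝ, f x = F x)
    (x y : ℝ) (hxy : x ≠ y) (hx : ∀ n : ℤ, σ * x ≠ Real.pi * n) :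
    Summable (fun n : ℤ =>
      ‖(σ : ℂ) * ((f x - f (Real.pi * n / σ)) / ((σ * x - Real.pi * n : ℝ) : ℂ)) *
        ((sinc (σ * y - Real.pi * n) : ℝ) : ℂ)‖) ∧
    ∑' n : ℤ,
        (σ : ℂ) * ((f x - f (Real.pi * n / σ)) / ((σ * x - Real.pi * n : ℝ) : ℂ)) *
          ((sinc (σ * y - Real.pi * n) : ℝ) : ℂ)
      = (f x - f y) / ((x : ℂ) - (y : ℂ)) := by
  have h := divided_difference_sampling_general hσ hF hFbound (x := x) (y := y)
    (by exact_mod_cast hxy) fun n ↦ by exact_mod_cast hx n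
  simpa [hfF, ← csinc_ofReal] using h
end

section
/- Let σ, M > 0 and let f : ℝ → ℂ be bandlimited with parameters (σ, M). Then for every x ∈ ℝ with σx ∉ πℤ, Σ_{n∈ℤ} |f(x) − f(πn/σ)|²/(σx − πn)² ≤ 3·(sup_{t∈ℝ} |f(t)|)² ≤ 3M². -/
open scoped ENNReal

/-!
Let `S = sup |f|`. By Phragmén–Lindelöf the growth bound improves to `|F z| ≤ S exp(σ|Im z|)`, and
Bernstein's inequality `|F'| ≤ σ S` holds on the real line. Hence
`|f x - f (πn/σ)| ≤ S min(2, |σx - πn|)`, and it remains to see that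
`∑ min(1, 4 / (r - πn)²) ≤ 3` for every real `r`: split the sum at the two lattice points adjacent
to `r` and bound both tails by telescoping.

For Bernstein's inequality, `E z = l exp(-iσz) - F z` with `|l| > S` has no zeros in the closed
upper half-plane, so Phragmén–Lindelöf applied to `conj (E (conj z)) / E z` yields
`|E (conj z)| ≤ |E z|` there. Differentiating across a real point `x`, for all such `l`, shows that
the disc whose diameter joins `F x` to `i F' x / σ` lies in the disc of radius `S` about the origin,
so `|F' x| ≤ σ S`.
-/

open Complex ComplexConjugate Filter Topology
open scoped Real InnerProductSpace

section LatticeSums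

theorem one_div_sq_le_one_div_sub_one_div {h u : ℝ} (hh : 0 < h) (hu : h / 2 < u) :
    1 / u ^ 2 ≤ 1 / (h * (u - h / 2)) - 1 / (h * (u + h / 2)) := by
  have hsub : 0 < u - h / 2 := by linarith
  have hadd : 0 < u + h / 2 := by linarith
  calc 1 / u ^ 2 ≤ 1 / ((u - h / 2) * (u + h / 2)) :=
        one_div_le_one_div_of_le (mul_pos hsub hadd) (by nlinarith)
    _ = 1 / (h * (u - h / 2)) - 1 / (h * (u + h / 2)) := by
        rw [div_sub_div _ _ (by positivity) (by positivity),
          div_eq_div_iff (by positivity) (by positivity)]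
        ring

theorem sum_range_one_div_add_mul_sq_le {h c : ℝ} (hh : 0 < h) (hc : h / 2 < c) (N : ℕ) :
    ∑ i ∈ Finset.range N, 1 / (c + h * i) ^ 2 ≤ 1 / (h * (c - h / 2)) := by
  let g : ℕ → ℝ := fun i ↦ 1 / (h * (c + h * i - h / 2))
  have hterm (i : ℕ) : 1 / (c + h * i) ^ 2 ≤ g i - g (i + 1) := by
    have hi : 0 ≤ h * i := by positivity
    convert one_div_sq_le_one_div_sub_one_div hh (show h / 2 < c + h * i by linarith) using 4
    push_cast
    ring
  have hgN : 0 ≤ g N := by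
    have : 0 < c + h * N - h / 2 := by linarith [show 0 ≤ h * N by positivity]
    positivity
  calc ∑ i ∈ Finset.range N, 1 / (c + h * i) ^ 2
      ≤ ∑ i ∈ Finset.range N, (g i - g (i + 1)) := Finset.sum_le_sum fun i _ ↦ hterm i
    _ = g 0 - g N := Finset.sum_range_sub' g N
    _ ≤ g 0 := sub_le_self _ hgN
    _ = 1 / (h * (c - h / 2)) := by simp [g]

theorem tsum_ofReal_one_div_add_mul_sq_le {h c : ℝ} (hh : 0 < h) (hc : h / 2 < c) :
    ∑' n : ℕ, ENNReal.ofReal (1 / (c + h * n) ^ 2) ≤ ENNReal.ofReal (1 / (h * (c - h / 2))) := by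
  refine ENNReal.tsum_le_of_sum_range_le fun N ↦ ?_
  rw [← ENNReal.ofReal_sum_of_nonneg fun i _ ↦ by positivity]
  exact ENNReal.ofReal_le_ofReal (sum_range_one_div_add_mul_sq_le hh hc N)

theorem tsum_nat_min_one_four_div_sq_le {c : ℝ} (hc : 0 ≤ c) :
    ∑' n : ℕ, ENNReal.ofReal (min 1 (4 / (c + π * n) ^ 2)) ≤
      ENNReal.ofReal (min 1 (4 / c ^ 2) + 4 / (π * (c + π / 2))) := by
  have hπ := Real.pi_pos
  have htail : ∑' n : ℕ, ENNReal.ofReal (min 1 (4 / (c + π * (n + 1 : ℕ)) ^ 2)) ≤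
      ENNReal.ofReal (4 / (π * (c + π / 2))) := by
    calc ∑' n : ℕ, ENNReal.ofReal (min 1 (4 / (c + π * (n + 1 : ℕ)) ^ 2))
        ≤ ∑' n : ℕ, ENNReal.ofReal 4 * ENNReal.ofReal (1 / (c + π + π * n) ^ 2) := by
          refine ENNReal.tsum_le_tsum fun n ↦ ?_
          rw [← ENNReal.ofReal_mul (by norm_num)]
          refine ENNReal.ofReal_le_ofReal ((min_le_right _ _).trans_eq ?_)
          push_cast
          ring
      _ ≤ ENNReal.ofReal 4 * ENNReal.ofReal (1 / (π * (c + π - π / 2))) := by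
          rw [ENNReal.tsum_mul_left]
          gcongr
          exact tsum_ofReal_one_div_add_mul_sq_le hπ (by linarith)
      _ = ENNReal.ofReal (4 / (π * (c + π / 2))) := by
          rw [← ENNReal.ofReal_mul (by norm_num)]
          ring_nf
  rw [tsum_eq_zero_add' ENNReal.summable, ENNReal.ofReal_add (by positivity) (by positivity)]
  exact add_le_add (by simp) htail

theorem min_one_four_div_sq_add_tails_le {a b : ℝ} (ha : 0 ≤ a) (hb : 0 ≤ b) (hab : a + b = π) :
    min 1 (4 / a ^ 2) + 4 / (π * (a + π / 2)) +
      (min 1 (4 / b ^ 2) + 4 / (π * (b + π / 2))) ≤ 3 := by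
  wlog hle : a ≤ b generalizing a b
  · rw [add_comm]
    exact this hb ha (by linarith) (by linarith)
  have hπ := Real.pi_gt_three
  have htails : 4 / (π * (a + π / 2)) + 4 / (π * (b + π / 2)) =
      8 / ((a + π / 2) * (b + π / 2)) := by
    rw [← hab]
    have : a + b ≠ 0 := by linarith
    have : a + (a + b) / 2 ≠ 0 := by linarith
    have : b + (a + b) / 2 ≠ 0 := by linarith
    field_simp
    ring
  have hprod : (a + π / 2) * (b + π / 2) = π ^ 2 - ((b - a) / 2) ^ 2 := by
    rw [← hab]
    ring
  have hmin_a : min 1 (4 / a ^ 2) ≤ 1 := min_le_left _ _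
  rcases le_total (b - a) 2 with hclose | hfar
  · have hmin_b : min 1 (4 / b ^ 2) ≤ 1 := min_le_left _ _
    have : 8 / ((a + π / 2) * (b + π / 2)) ≤ 1 := by
      rw [div_le_one (by positivity), hprod]
      nlinarith
    linarith
  · have hmin_b : min 1 (4 / b ^ 2) ≤ 16 / 25 := by
      refine (min_le_right _ _).trans ?_
      rw [div_le_div_iff₀ (by nlinarith) (by norm_num)]
      nlinarith
    have : 8 / ((a + π / 2) * (b + π / 2)) ≤ 32 / 27 := by
      rw [div_le_div_iff₀ (by positivity) (by norm_num), hprod]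
      nlinarith
    linarith

theorem tsum_int_min_one_four_div_add_sq_le_of_mem_Icc {r : ℝ} (hr : r ∈ Set.Icc 0 π) :
    ∑' n : ℤ, ENNReal.ofReal (min 1 (4 / (r + π * n) ^ 2)) ≤ 3 := by
  rw [tsum_of_nat_of_neg_add_one ENNReal.summable ENNReal.summable]
  have hneg (n : ℕ) : (r + π * (-((n : ℤ) + 1) : ℤ)) ^ 2 = (π - r + π * n) ^ 2 := by
    push_cast
    ring
  simp only [hneg, Int.cast_natCast]
  have hr₀ : 0 ≤ r := hr.1
  have hrπ : 0 ≤ π - r := sub_nonneg.2 hr.2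
  calc _ ≤ ENNReal.ofReal (min 1 (4 / r ^ 2) + 4 / (π * (r + π / 2))) +
        ENNReal.ofReal (min 1 (4 / (π - r) ^ 2) + 4 / (π * (π - r + π / 2))) :=
        add_le_add (tsum_nat_min_one_four_div_sq_le hr₀) (tsum_nat_min_one_four_div_sq_le hrπ)
    _ ≤ ENNReal.ofReal 3 := by
        rw [← ENNReal.ofReal_add (by positivity) (by positivity)]
        exact ENNReal.ofReal_le_ofReal (min_one_four_div_sq_add_tails_le hr₀ hrπ (by ring))
    _ = 3 := by simp

theorem tsum_int_min_one_four_div_sub_sq_le (r : ℝ) :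
    ∑' n : ℤ, ENNReal.ofReal (min 1 (4 / (r - π * n) ^ 2)) ≤ 3 := by
  have hshift (n : ℤ) :
      r - π * (Equiv.subLeft ⌊r / π⌋ n : ℤ) = r - ⌊r / π⌋ * π + π * n := by
    rw [Equiv.subLeft_apply]
    push_cast
    ring
  rw [← (Equiv.subLeft ⌊r / π⌋).tsum_eq]
  simp only [hshift]
  exact tsum_int_min_one_four_div_add_sq_le_of_mem_Icc
    ⟨Int.sub_floor_div_mul_nonneg r Real.pi_pos, (Int.sub_floor_div_mul_lt r Real.pi_pos).le⟩

theorem sq_div_sq_le_sq_mul_min {d S u : ℝ} (hd : 0 ≤ d) (hS : d ≤ 2 * S) (hu : d ≤ S * |u|) :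
    d ^ 2 / u ^ 2 ≤ S ^ 2 * min 1 (4 / u ^ 2) := by
  rw [mul_min_of_nonneg _ _ (sq_nonneg S), mul_one, le_min_iff]
  constructor
  · refine div_le_of_le_mul₀ (sq_nonneg u) (sq_nonneg S) ?_
    calc d ^ 2 ≤ (S * |u|) ^ 2 := pow_le_pow_left₀ hd hu 2
      _ = S ^ 2 * u ^ 2 := by rw [mul_pow, sq_abs]
  · calc d ^ 2 / u ^ 2 ≤ (2 * S) ^ 2 / u ^ 2 := by gcongr
      _ = S ^ 2 * (4 / u ^ 2) := by ring

theorem tsum_int_sq_div_sub_sq_le {S r : ℝ} {d : ℤ → ℝ} (hd : ∀ n, 0 ≤ d n)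
    (hS : ∀ n, d n ≤ 2 * S) (hr : ∀ n : ℤ, d n ≤ S * |r - π * n|) :
    ∑' n : ℤ, ENNReal.ofReal (d n ^ 2 / (r - π * n) ^ 2) ≤ ENNReal.ofReal (3 * S ^ 2) := by
  calc ∑' n : ℤ, ENNReal.ofReal (d n ^ 2 / (r - π * n) ^ 2)
      ≤ ∑' n : ℤ, ENNReal.ofReal (S ^ 2) * ENNReal.ofReal (min 1 (4 / (r - π * n) ^ 2)) := by
        refine ENNReal.tsum_le_tsum fun n ↦ ?_
        rw [← ENNReal.ofReal_mul (sq_nonneg S)]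
        exact ENNReal.ofReal_le_ofReal (sq_div_sq_le_sq_mul_min (hd n) (hS n) (hr n))
    _ ≤ ENNReal.ofReal (S ^ 2) * 3 := by
        rw [ENNReal.tsum_mul_left]
        gcongr
        exact tsum_int_min_one_four_div_sub_sq_le r
    _ = ENNReal.ofReal (3 * S ^ 2) := by
        rw [mul_comm, ENNReal.ofReal_mul (by norm_num), ENNReal.ofReal_ofNat]

end LatticeSums

theorem norm_le_of_bounded_on_upper_half_plane {E : Type*} [NormedAddCommGroup E]
    [NormedSpace ℂ E] {G : ℂ → E} {B C : ℝ}
    (hG : DiffContOnCl ℂ G {z | 0 < z.im}) (hB : ∀ z : ℂ, 0 < z.im → ‖G z‖ ≤ B)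
    (hC : ∀ x : ℝ, ‖G x‖ ≤ C) {z : ℂ} (hz : 0 ≤ z.im) : ‖G z‖ ≤ C := by
  have hrot : ‖G (I * (-I * z))‖ ≤ C := by
    refine PhragmenLindelof.right_half_plane_of_bounded_on_real (f := fun w ↦ G (I * w))
      ?_ ⟨1, by norm_num, 0, ?_⟩ ?_ (fun t ↦ ?_) (by simpa using hz)
    · exact hG.comp (Differentiable.diffContOnCl (by fun_prop)) fun w hw ↦ by simpa using hw
    · refine Asymptotics.IsBigO.of_bound B (Eventually.filter_mono inf_le_right ?_)
      exact eventually_principal.2 fun w hw ↦ by simpa using hB (I * w) (by simpa using hw)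
    · refine isBoundedUnder_of_eventually_le (a := B) ?_
      filter_upwards [eventually_gt_atTop 0] with t ht
      exact hB _ (by simpa using ht)
    · have hreal : I * (t * I) = ((-t : ℝ) : ℂ) := by
        push_cast
        linear_combination (t : ℂ) * I_mul_I
      simpa only [hreal] using hC (-t)
  simpa [← mul_assoc] using hrot

theorem norm_conj_le_of_norm_conj_le_mul {E : ℂ → ℂ} {B : ℝ} (hE : Differentiable ℂ E)
    (hE₀ : ∀ z : ℂ, 0 ≤ z.im → E z ≠ 0) (hB : ∀ z : ℂ, 0 ≤ z.im → ‖E (conj z)‖ ≤ B * ‖E z‖)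
    {z : ℂ} (hz : 0 ≤ z.im) : ‖E (conj z)‖ ≤ ‖E z‖ := by
  have hquot : ‖conj (E (conj z)) / E z‖ ≤ 1 := by
    refine norm_le_of_bounded_on_upper_half_plane (G := fun w ↦ conj (E (conj w)) / E w) (B := B)
      (DifferentiableOn.diffContOnCl fun w hw ↦ ?_) (fun w hw ↦ ?_) (fun t ↦ ?_) hz
    · rw [closure_setOfPred_lt_im] at hw
      have hconj : DifferentiableAt ℂ (fun w ↦ conj (E (conj w))) w := by
        simpa [Function.comp_def] using (hE (conj w)).conj_conj
      exact (hconj.div (hE w) (hE₀ w hw)).differentiableWithinAt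
    · rw [norm_div, RCLike.norm_conj, div_le_iff₀ (norm_pos_iff.2 (hE₀ w hw.le))]
      exact hB w hw.le
    · rw [norm_div, RCLike.norm_conj, conj_ofReal]
      exact div_self_le_one _
  rwa [norm_div, RCLike.norm_conj, div_le_one (norm_pos_iff.2 (hE₀ z hz))] at hquot

theorem nonneg_of_hasDerivAt_of_apply_neg_le {ψ : ℝ → ℝ} {ψ' : ℝ} (hψ : HasDerivAt ψ ψ' 0)
    (h : ∀ y, 0 < y → ψ (-y) ≤ ψ y) : 0 ≤ ψ' := by
  have hodd : HasDerivAt (fun y ↦ ψ y - ψ (-y)) (2 * ψ') 0 := by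
    have hneg : HasDerivAt (fun y ↦ ψ (-y)) (-ψ') 0 :=
      (HasDerivAt.scomp (0 : ℝ) (by simpa using hψ) (hasDerivAt_neg (0 : ℝ))).congr_deriv (by simp)
    exact (hψ.sub hneg).congr_deriv (by ring)
  have hlim : 0 ≤ 2 * ψ' := by
    refine ge_of_tendsto hodd.tendsto_slope_zero_right ?_
    filter_upwards [self_mem_nhdsWithin] with y hy
    have hy : 0 < y := hy
    simpa using mul_nonneg (inv_nonneg.2 hy.le) (sub_nonneg.2 (h y hy))
  linarith

theorem inner_I_mul_deriv_nonneg_of_norm_conj_le {E : ℂ → ℂ} {E' : ℂ} {x : ℝ}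
    (hE : HasDerivAt E E' x) (h : ∀ z : ℂ, 0 ≤ z.im → ‖E (conj z)‖ ≤ ‖E z‖) :
    0 ≤ ⟪E x, I * E'⟫_ℝ := by
  have hline : HasDerivAt (fun y : ℝ ↦ E (x + y * I)) (I * E') 0 := by
    have hvert : HasDerivAt (fun y : ℝ ↦ (x : ℂ) + y * I) I 0 := by
      simpa using ((hasDerivAt_id (0 : ℝ)).ofReal_comp.mul_const I).const_add (x : ℂ)
    exact HasDerivAt.scomp (0 : ℝ) (by simpa using hE) hvert
  have hnonneg : 0 ≤ 2 * ⟪E (x + (0 : ℝ) * I), I * E'⟫_ℝ := by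
    refine nonneg_of_hasDerivAt_of_apply_neg_le hline.norm_sq fun y hy ↦ ?_
    have hxy := h (x + y * I) (by simpa using hy.le)
    gcongr
    simpa using hxy
  simpa using hnonneg

theorem norm_le_of_inner_sub_sub_nonneg {V : Type*} [NormedAddCommGroup V] [InnerProductSpace ℝ V]
    {a b : V} {S : ℝ} (ha : ‖a‖ ≤ S) (h : ∀ w, S < ‖w‖ → 0 ≤ ⟪w - a, w - b⟫_ℝ) : ‖b‖ ≤ S := by
  by_contra! hb
  have hnear : ∀ᶠ t in 𝓝[>] (0 : ℝ), S < ‖b + t • (a - b)‖ := by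
    have hcont : Continuous fun t : ℝ ↦ ‖b + t • (a - b)‖ := by fun_prop
    exact nhdsWithin_le_nhds (hcont.continuousAt.eventually_const_lt (by simpa using hb))
  obtain ⟨t, hSt, ht₀, ht₁⟩ := (hnear.and (Ioo_mem_nhdsGT one_pos)).exists
  have hinner : ⟪b + t • (a - b) - a, b + t • (a - b) - b⟫_ℝ = -(t * (1 - t) * ‖a - b‖ ^ 2) := by
    have hleft : b + t • (a - b) - a = -((1 - t) • (a - b)) := by module
    rw [hleft, add_sub_cancel_left, inner_neg_left, real_inner_smul_left, real_inner_smul_right,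
      real_inner_self_eq_norm_sq]
    ring
  have hdist : 0 < ‖a - b‖ := norm_pos_iff.2 (sub_ne_zero.2 fun hab ↦ by rw [hab] at ha; linarith)
  have hpos : 0 < t * (1 - t) * ‖a - b‖ ^ 2 :=
    mul_pos (mul_pos ht₀ (sub_pos.2 ht₁)) (pow_pos hdist 2)
  linarith [h _ hSt]

/-- `F` is the entire extension of a function bandlimited with parameters `(σ, M)`: the Paley–Wiener
growth bound on `ℂ` encodes both the spectral support `[-σ, σ]` and the bound `M` on `ℝ`. -/
structure IsBandlimited {E : Type*} [NormedAddCommGroup E] [NormedSpace ℂ E]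
    (σ M : ℝ) (F : ℂ → E) : Prop where
  differentiable : Differentiable ℂ F
  norm_le : ∀ z : ℂ, ‖F z‖ ≤ M * Real.exp (σ * |z.im|)

/-- The Hermite–Biehler function `z ↦ l e^{-iσz} - F z` through which a bandlimited `F` is compared
with the extremal exponential. -/
noncomputable def hermiteBiehler (σ : ℝ) (l : ℂ) (F : ℂ → ℂ) (z : ℂ) : ℂ :=
  l * exp (-(σ * z * I)) - F z

theorem norm_exp_neg_ofReal_mul_mul_I (σ : ℝ) (z : ℂ) :
    ‖exp (-(σ * z * I))‖ = Real.exp (σ * z.im) := by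
  simp [norm_exp]

namespace IsBandlimited

section Growth

variable {E : Type*} [NormedAddCommGroup E] [NormedSpace ℂ E] {σ M S : ℝ} {F : ℂ → E}

theorem norm_ofReal_le (hF : IsBandlimited σ M F) (x : ℝ) : ‖F x‖ ≤ M := by
  simpa using hF.norm_le x

theorem comp_neg (hF : IsBandlimited σ M F) : IsBandlimited σ M fun z ↦ F (-z) where
  differentiable := hF.differentiable.comp differentiable_neg
  norm_le z := by simpa using hF.norm_le (-z)

theorem norm_le_mul_exp_of_im_nonneg (hF : IsBandlimited σ M F) (hS : ∀ x : ℝ, ‖F x‖ ≤ S)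
    {z : ℂ} (hz : 0 ≤ z.im) : ‖F z‖ ≤ S * Real.exp (σ * z.im) := by
  let G : ℂ → E := fun w ↦ (exp (-(σ * w * I)))⁻¹ • F w
  have hnorm (w : ℂ) : ‖G w‖ = ‖F w‖ / Real.exp (σ * w.im) := by
    rw [norm_smul, norm_inv, norm_exp_neg_ofReal_mul_mul_I, inv_mul_eq_div]
  have hG : Differentiable ℂ G :=
    (Differentiable.inv (by fun_prop) fun w ↦ exp_ne_zero _).smul hF.differentiable
  have hGz : ‖G z‖ ≤ S := by
    refine norm_le_of_bounded_on_upper_half_plane hG.diffContOnCl (B := M) (fun w hw ↦ ?_)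
      (fun t ↦ by simpa [hnorm] using hS t) hz
    rw [hnorm, div_le_iff₀ (Real.exp_pos _)]
    simpa only [abs_of_pos hw] using hF.norm_le w
  rwa [hnorm, div_le_iff₀ (Real.exp_pos _)] at hGz

theorem of_norm_ofReal_le (hF : IsBandlimited σ M F) (hS : ∀ x : ℝ, ‖F x‖ ≤ S) :
    IsBandlimited σ S F where
  differentiable := hF.differentiable
  norm_le z := by
    rcases le_total 0 z.im with hz | hz
    · rw [abs_of_nonneg hz]
      exact hF.norm_le_mul_exp_of_im_nonneg hS hz
    · have hneg := hF.comp_neg.norm_le_mul_exp_of_im_nonneg (z := -z)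
        (fun x ↦ by simpa using hS (-x)) (by simpa using hz)
      simpa [abs_of_nonpos hz] using hneg

end Growth

section Bernstein

variable {σ M : ℝ} {l : ℂ} {F : ℂ → ℂ}

theorem le_norm_hermiteBiehler (hF : IsBandlimited σ M F) {z : ℂ} (hz : 0 ≤ z.im) :
    (‖l‖ - M) * Real.exp (σ * z.im) ≤ ‖hermiteBiehler σ l F z‖ := by
  have hFz := hF.norm_le z
  rw [abs_of_nonneg hz] at hFz
  calc (‖l‖ - M) * Real.exp (σ * z.im) ≤ ‖l * exp (-(σ * z * I))‖ - ‖F z‖ := by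
        rw [norm_mul, norm_exp_neg_ofReal_mul_mul_I]
        linarith
    _ ≤ ‖hermiteBiehler σ l F z‖ := norm_sub_norm_le _ _

theorem norm_hermiteBiehler_conj_le (hF : IsBandlimited σ M F) (hσ : 0 ≤ σ) {z : ℂ}
    (hz : 0 ≤ z.im) :
    ‖hermiteBiehler σ l F (conj z)‖ ≤ (‖l‖ + M) * Real.exp (σ * z.im) := by
  have hFz := hF.norm_le (conj z)
  rw [conj_im, abs_neg, abs_of_nonneg hz] at hFz
  have hexp : Real.exp (σ * -z.im) ≤ Real.exp (σ * z.im) := by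
    gcongr
    linarith
  calc ‖hermiteBiehler σ l F (conj z)‖
      ≤ ‖l * exp (-(σ * conj z * I))‖ + ‖F (conj z)‖ := norm_sub_le _ _
    _ ≤ ‖l‖ * Real.exp (σ * z.im) + M * Real.exp (σ * z.im) := by
        rw [norm_mul, norm_exp_neg_ofReal_mul_mul_I, conj_im]
        gcongr
    _ = (‖l‖ + M) * Real.exp (σ * z.im) := by ring

theorem norm_hermiteBiehler_conj_le_norm (hF : IsBandlimited σ M F) (hσ : 0 ≤ σ) (hl : M < ‖l‖)
    {z : ℂ} (hz : 0 ≤ z.im) : ‖hermiteBiehler σ l F (conj z)‖ ≤ ‖hermiteBiehler σ l F z‖ := by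
  have hgap : 0 < ‖l‖ - M := sub_pos.2 hl
  have hM : 0 ≤ M := (norm_nonneg _).trans (hF.norm_ofReal_le 0)
  have hdiff := hF.differentiable
  refine norm_conj_le_of_norm_conj_le_mul (B := (‖l‖ + M) / (‖l‖ - M))
    (by unfold hermiteBiehler; fun_prop) (fun w hw ↦ norm_pos_iff.1 ?_) (fun w hw ↦ ?_) hz
  · exact (by positivity : 0 < (‖l‖ - M) * Real.exp (σ * w.im)).trans_le
      (hF.le_norm_hermiteBiehler hw)
  · calc ‖hermiteBiehler σ l F (conj w)‖ ≤ (‖l‖ + M) * Real.exp (σ * w.im) :=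
          hF.norm_hermiteBiehler_conj_le hσ hw
      _ = (‖l‖ + M) / (‖l‖ - M) * ((‖l‖ - M) * Real.exp (σ * w.im)) := by field_simp
      _ ≤ (‖l‖ + M) / (‖l‖ - M) * ‖hermiteBiehler σ l F w‖ := by
          gcongr
          exact hF.le_norm_hermiteBiehler hw

theorem inner_sub_sub_I_mul_deriv_nonneg (hF : IsBandlimited σ M F) (hσ : 0 ≤ σ) (x : ℝ) {w : ℂ}
    (hw : M < ‖w‖) : 0 ≤ ⟪w - F x, σ * w - I * deriv F x⟫_ℝ := by
  -- With this `l` the exponential term takes the value `w` at `x`.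
  set l := w * exp (σ * x * I) with hl
  have hlw : l * exp (-(σ * x * I)) = w := by rw [hl, mul_assoc, ← exp_add]; simp
  have hnorm : ‖l‖ = ‖w‖ := by rw [hl, norm_mul, ← ofReal_mul, norm_exp_ofReal_mul_I, mul_one]
  have hderiv : HasDerivAt (hermiteBiehler σ l F) (-(σ * I) * w - deriv F x) x := by
    have harg : HasDerivAt (fun z : ℂ ↦ -(σ * z * I)) (-(σ * I)) x := by
      simpa using (((hasDerivAt_id (x : ℂ)).const_mul (σ : ℂ)).mul_const I).fun_neg
    refine ((harg.cexp.const_mul l).sub (hF.differentiable x).hasDerivAt).congr_deriv ?_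
    rw [← mul_assoc, hlw, mul_comm w]
  have hnonneg := inner_I_mul_deriv_nonneg_of_norm_conj_le hderiv fun z hz ↦
    hF.norm_hermiteBiehler_conj_le_norm hσ (hnorm ▸ hw) hz
  rw [hermiteBiehler, hlw] at hnonneg
  convert hnonneg using 2
  linear_combination (σ * w) * I_mul_I

theorem norm_deriv_ofReal_le (hF : IsBandlimited σ M F) (hσ : 0 < σ) (x : ℝ) :
    ‖deriv F x‖ ≤ σ * M := by
  have hball : ‖(σ : ℂ)⁻¹ * (I * deriv F x)‖ ≤ M := by
    refine norm_le_of_inner_sub_sub_nonneg (hF.norm_ofReal_le x) fun w hw ↦ ?_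
    have hscale : σ * w - I * deriv F x = σ • (w - (σ : ℂ)⁻¹ * (I * deriv F x)) := by
      have : (σ : ℂ) ≠ 0 := ofReal_ne_zero.2 hσ.ne'
      rw [real_smul]
      field_simp
    have hnonneg := hF.inner_sub_sub_I_mul_deriv_nonneg hσ.le x hw
    rw [hscale, real_inner_smul_right] at hnonneg
    exact nonneg_of_mul_nonneg_right hnonneg hσ
  rwa [norm_mul, norm_mul, norm_I, one_mul, norm_inv, norm_real, Real.norm_of_nonneg hσ.le,
    inv_mul_le_iff₀ hσ] at hball

theorem norm_ofReal_sub_ofReal_le (hF : IsBandlimited σ M F) (hσ : 0 < σ) (x t : ℝ) :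
    ‖F x - F t‖ ≤ σ * M * |x - t| :=
  Convex.norm_image_sub_le_of_norm_hasDerivWithin_le (f := fun y : ℝ ↦ F y)
    (fun y _ ↦ (hF.differentiable y).hasDerivAt.comp_ofReal.hasDerivWithinAt)
    (fun y _ ↦ hF.norm_deriv_ofReal_le hσ y) convex_univ (Set.mem_univ t) (Set.mem_univ x)

end Bernstein

theorem tsum_norm_sub_sq_div_sq_le {σ M : ℝ} {F : ℂ → ℂ} (hF : IsBandlimited σ M F) (hσ : 0 < σ)
    (x : ℝ) :
    ∑' n : ℤ, ENNReal.ofReal (‖F x - F (π * n / σ : ℝ)‖ ^ 2 / (σ * x - π * n) ^ 2) ≤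
      ENNReal.ofReal (3 * M ^ 2) := by
  refine tsum_int_sq_div_sub_sq_le (fun n ↦ norm_nonneg _) (fun n ↦ ?_) fun n ↦ ?_
  · calc ‖F x - F (π * n / σ : ℝ)‖ ≤ ‖F x‖ + ‖F (π * n / σ : ℝ)‖ := norm_sub_le _ _
      _ ≤ M + M := add_le_add (hF.norm_ofReal_le _) (hF.norm_ofReal_le _)
      _ = 2 * M := (two_mul M).symm
  · calc ‖F x - F (π * n / σ : ℝ)‖ ≤ σ * M * |x - π * n / σ| :=
          hF.norm_ofReal_sub_ofReal_le hσ _ _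
      _ = M * |σ * (x - π * n / σ)| := by rw [abs_mul, abs_of_pos hσ]; ring
      _ = M * |σ * x - π * n| := by rw [mul_sub, mul_div_cancel₀ _ hσ.ne']

end IsBandlimited

/-- For a bandlimited function `f` (restriction to `ℝ` of an entire `F` with
`|F z| ≤ M·exp(σ|Im z|)`) and `x` with `σx ∉ πℤ`:
`Σ_{n∈ℤ} |f(x) − f(πn/σ)|²/(σx − πn)² ≤ 3·(sup|f|)² ≤ 3M²` (the sum computed
in `[0,∞]`). -/
theorem bandlimited_sampling_square_sum
    (σ M : ℝ) (hσ : 0 < σ) (hM : 0 < M)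
    (f : ℝ → ℂ) (F : ℂ → ℂ) (hF : Differentiable ℂ F)
    (hFbound : ∀ z : ℂ, ‖F z‖ ≤ M * Real.exp (σ * |z.im|))
    (hfF : ∀ x : ℝ, f x = F x)
    (x : ℝ) (hx : ∀ n : ℤ, σ * x ≠ Real.pi * n) :
    (∑' n : ℤ, ENNReal.ofReal
        (‖f x - f (Real.pi * n / σ)‖ ^ 2 / (σ * x - Real.pi * n) ^ 2))
      ≤ ENNReal.ofReal (3 * (⨆ t : ℝ, ‖f t‖) ^ 2) ∧
    3 * (⨆ t : ℝ, ‖f t‖) ^ 2 ≤ 3 * M ^ 2 := by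
  obtain rfl : f = fun t : ℝ ↦ F t := funext hfF
  have hband : IsBandlimited σ M F := ⟨hF, hFbound⟩
  have hle_sup (t : ℝ) : ‖F t‖ ≤ ⨆ t : ℝ, ‖F t‖ :=
    le_ciSup ⟨M, Set.forall_mem_range.2 hband.norm_ofReal_le⟩ t
  refine ⟨(hband.of_norm_ofReal_le hle_sup).tsum_norm_sub_sq_div_sq_le hσ x, ?_⟩
  have hsup_nonneg : 0 ≤ ⨆ t : ℝ, ‖F t‖ := Real.iSup_nonneg fun t ↦ norm_nonneg _
  gcongr
  exact ciSup_le hband.norm_ofReal_le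
end

section
/- Let 0 < α < 1 and 1 < p < ∞. There exists a constant c > 0, depending only on α and p, such that whenever f : ℝ → ℝ satisfies |f(x) − f(y)| ≤ C·|x − y|^α for all x, y ∈ ℝ, and A, B are bounded self-adjoint operators on a complex Hilbert space with Σ_{j∈ℕ} s_j(A − B)^p < ∞, then Σ_{j∈ℕ} s_j(f(A) − f(B))^{p/α} < ∞ and (Σ_{j∈ℕ} s_j(f(A) − f(B))^{p/α})^{α/p} ≤ c·C·(Σ_{j∈ℕ} s_j(A − B)^p)^{α/p}. That is, A − B ∈ S_p implies f(A) − f(B) ∈ S_{p/α} with the corresponding norm estimate. -/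
/-- The `j`-th singular value of a bounded operator `T`:
`s_j(T) = inf { ‖T − R‖ : rank R ≤ j }`. -/
noncomputable def singularValue {H : Type*} [NormedAddCommGroup H]
    [InnerProductSpace ℂ H] (T : H →L[ℂ] H) (j : ℕ) : ℝ :=
  sInf {r : ℝ | ∃ R : H →L[ℂ] H,
    Module.rank ℂ (LinearMap.range (R : H →ₗ[ℂ] H)) ≤ (j : Cardinal) ∧ r = ‖T - R‖}

/-!
Write `K_n(T)` for the infimum of `n ‖Y‖ + ∑ ‖x_i‖ ‖y_i‖` over the decompositions
`T = Y + ∑ x_i ⊗ y_i`. Up to absolute constants it is the sum of the first `n` singular values of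
`T`, and it does not increase under maps `X ↦ ∑ u_i X v_i` for which `∑ u_i* u_i`, `∑ u_i u_i*`,
`∑ v_i* v_i` and `∑ v_i v_i*` are contractions.

The Cayley transform replaces `A` and `B` by unitaries `U` and `V`. For a polynomial `P` of degree
at most `N` with `|P| ≤ 1` on the circle, the expansion
`P(U) - P(V) = ∑_k (divX^[k+1] P)(U) (U - V) V^k` together with Parseval's identity on the roots of
`ζ ^ N = -z ^ N` shows that `K_n(P(U) - P(V))` is at most a constant times `N K_n(U - V)`.
Approximating the Hölder function at dyadic degrees by Jackson kernels and telescoping these bounds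
up to a degree of order the inverse of `κ = K_n(U - V) / n` gives, with `n = j + 1`,
`s_j(f(A) - f(B)) ≤ c C ((s_0(A - B) + ⋯ + s_j(A - B)) / (j + 1)) ^ α`,
and Hardy's inequality sums the powers of these bounds.
-/

open ContinuousLinearMap InnerProductSpace Polynomial
open scoped ComplexConjugate NNReal

section KyFan

variable {𝕜 H ι : Type*} [RCLike 𝕜] [NormedAddCommGroup H] [InnerProductSpace 𝕜 H]

theorem sum_mul_le_of_sum_sq_le {s : Finset ι} {a b : ι → ℝ} {A B : ℝ} (hA : 0 ≤ A) (hB : 0 ≤ B)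
    (ha : ∑ i ∈ s, a i ^ 2 ≤ A ^ 2) (hb : ∑ i ∈ s, b i ^ 2 ≤ B ^ 2) :
    ∑ i ∈ s, a i * b i ≤ A * B :=
  (Real.sum_mul_le_sqrt_mul_sqrt s a b).trans <|
    mul_le_mul (Real.sqrt_le_left hA |>.2 ha) (Real.sqrt_le_left hB |>.2 hb) (by positivity) hA

/-- The row and column square functions of the family `u` over `s` are bounded by `M`: both
`∑ l, (u l)* (u l)` and `∑ l, (u l) (u l)*` are at most `M ^ 2`. These are the multipliers for
which `X ↦ ∑ l, u l * X * v l` is bounded on the operators and on the trace class. -/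
structure SquareFunctionBound [CompleteSpace H] (s : Finset ι) (u : ι → H →L[𝕜] H) (M : ℝ) :
    Prop where
  nonneg : 0 ≤ M
  column : ∀ x, ∑ l ∈ s, ‖u l x‖ ^ 2 ≤ (M * ‖x‖) ^ 2
  row : ∀ x, ∑ l ∈ s, ‖adjoint (u l) x‖ ^ 2 ≤ (M * ‖x‖) ^ 2

namespace SquareFunctionBound

variable [CompleteSpace H] {s : Finset ι} {u v : ι → H →L[𝕜] H} {M N : ℝ}

theorem of_isStarNormal (hu : ∀ l ∈ s, IsStarNormal (u l)) (hM : 0 ≤ M)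
    (h : ∀ x, ∑ l ∈ s, ‖u l x‖ ^ 2 ≤ (M * ‖x‖) ^ 2) : SquareFunctionBound s u M where
  nonneg := hM
  column := h
  row x := by
    refine (Finset.sum_congr rfl fun l hl ↦ ?_).trans_le (h x)
    rw [(isStarNormal_iff_norm_eq_adjoint.1 (hu l hl)) x]

theorem singleton_unit (a : H →L[𝕜] H) : SquareFunctionBound {()} (fun _ ↦ a) ‖a‖ where
  nonneg := norm_nonneg a
  column x := by
    rw [Finset.sum_singleton]
    gcongr
    exact a.le_opNorm x
  row x := by
    rw [Finset.sum_singleton, ← adjoint.norm_map a]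
    gcongr
    exact (adjoint a).le_opNorm x

theorem norm_sum_mul_mul_le (hu : SquareFunctionBound s u M) (hv : SquareFunctionBound s v N)
    (Y : H →L[𝕜] H) : ‖∑ l ∈ s, u l * Y * v l‖ ≤ M * N * ‖Y‖ := by
  have hM := hu.nonneg
  have hN := hv.nonneg
  refine opNorm_le_of_re_inner_le (by positivity) fun x y hx hy ↦ ?_
  rw [sum_apply, sum_inner, map_sum]
  calc ∑ l ∈ s, RCLike.re ⟪(u l * Y * v l) x, y⟫_𝕜
      ≤ ∑ l ∈ s, ‖Y‖ * (‖v l x‖ * ‖adjoint (u l) y‖) := by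
        gcongr with l
        rw [mul_apply_eq_comp, mul_apply_eq_comp, ← adjoint_inner_right, ← mul_assoc]
        refine (re_inner_le_norm _ _).trans ?_
        gcongr
        exact Y.le_opNorm _
    _ ≤ ‖Y‖ * ((N * ‖x‖) * (M * ‖y‖)) := by
        rw [← Finset.mul_sum]
        gcongr
        exact sum_mul_le_of_sum_sq_le (by positivity) (by positivity) (hv.column x) (hu.row y)
    _ = M * N * ‖Y‖ := by rw [hx, hy]; ring

end SquareFunctionBound

/-- `KyFanBound n T κ` says that `T = Y + ∑ i, x i ⊗ y i` (a finite sum) for some `Y`, `x`, `y`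
with `n * ‖Y‖ + ∑ i, ‖x i‖ * ‖y i‖ ≤ κ`: the `K`-functional of `T` at `n` between the trace class
and the bounded operators is at most `κ`. Up to a factor this bounds the Ky Fan norm
`∑ m < n, s_m(T)`. It is encoded inductively so that no decomposition has to be carried around. -/
inductive KyFanBound (n : ℕ) : (H →L[𝕜] H) → ℝ → Prop
  | of_norm (Y : H →L[𝕜] H) (κ : ℝ) (h : n * ‖Y‖ ≤ κ) : KyFanBound n Y κ
  | rankOne (x y : H) (κ : ℝ) (h : ‖x‖ * ‖y‖ ≤ κ) : KyFanBound n (rankOne 𝕜 x y) κ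
  | add {X Y : H →L[𝕜] H} {κ μ : ℝ} (hX : KyFanBound n X κ) (hY : KyFanBound n Y μ) :
    KyFanBound n (X + Y) (κ + μ)

namespace KyFanBound

variable {n : ℕ} {X : H →L[𝕜] H} {κ μ : ℝ}

theorem nonneg (h : KyFanBound n X κ) : 0 ≤ κ := by
  induction h with
  | of_norm Y κ h => exact le_trans (by positivity) h
  | rankOne x y κ h => exact le_trans (by positivity) h
  | add _ _ hκ hμ => exact add_nonneg hκ hμ

theorem zero (n : ℕ) : KyFanBound n (0 : H →L[𝕜] H) 0 :=
  of_norm _ _ (by simp)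

theorem mono (h : KyFanBound n X κ) (hκμ : κ ≤ μ) : KyFanBound n X μ := by
  simpa using h.add (of_norm (0 : H →L[𝕜] H) (μ - κ) (by simpa using hκμ))

theorem sum {s : Finset ι} {X : ι → H →L[𝕜] H} {κ : ι → ℝ}
    (h : ∀ i ∈ s, KyFanBound n (X i) (κ i)) : KyFanBound n (∑ i ∈ s, X i) (∑ i ∈ s, κ i) := by
  classical
  induction s using Finset.induction_on with
  | empty => simpa using zero n
  | insert i s hi ih =>
    rw [Finset.sum_insert hi, Finset.sum_insert hi]
    exact (h i (by simp)).add (ih fun l hl ↦ h l (by simp [hl]))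

theorem sum_mul_mul [CompleteSpace H] (h : KyFanBound n X κ) {s : Finset ι}
    {u v : ι → H →L[𝕜] H} {M N : ℝ} (hu : SquareFunctionBound s u M)
    (hv : SquareFunctionBound s v N) : KyFanBound n (∑ l ∈ s, u l * X * v l) (M * N * κ) := by
  have hM := hu.nonneg
  have hN := hv.nonneg
  induction h with
  | of_norm Y κ h =>
    refine of_norm _ _ ?_
    calc n * ‖∑ l ∈ s, u l * Y * v l‖ ≤ n * (M * N * ‖Y‖) := by
          gcongr
          exact hu.norm_sum_mul_mul_le hv Y
      _ = M * N * (n * ‖Y‖) := by ring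
      _ ≤ M * N * κ := by gcongr
  | rankOne x y κ h =>
    have mul_rankOne_mul (l : ι) : u l * InnerProductSpace.rankOne 𝕜 x y * v l =
        InnerProductSpace.rankOne 𝕜 (u l x) (adjoint (v l) y) := by
      ext z
      simp [adjoint_inner_left]
    simp_rw [mul_rankOne_mul]
    refine (sum fun l _ ↦ rankOne _ _ _ le_rfl).mono ?_
    calc ∑ l ∈ s, ‖u l x‖ * ‖adjoint (v l) y‖ ≤ M * ‖x‖ * (N * ‖y‖) :=
          sum_mul_le_of_sum_sq_le (by positivity) (by positivity) (hu.column x) (hv.row y)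
      _ = M * N * (‖x‖ * ‖y‖) := by ring
      _ ≤ M * N * κ := by gcongr
  | add _ _ hX hY =>
    simpa only [mul_add, add_mul, Finset.sum_add_distrib] using hX.add hY

theorem mul_mul [CompleteSpace H] (h : KyFanBound n X κ) (a b : H →L[𝕜] H) :
    KyFanBound n (a * X * b) (‖a‖ * ‖b‖ * κ) := by
  simpa using h.sum_mul_mul (SquareFunctionBound.singleton_unit a)
    (SquareFunctionBound.singleton_unit b)

theorem sum_re_inner_le (h : KyFanBound n X κ) {r : ℕ} (hr : r ≤ n) {e f : Fin r → H}
    (he : Orthonormal 𝕜 e) (hf : Orthonormal 𝕜 f) :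
    ∑ k, RCLike.re ⟪f k, X (e k)⟫_𝕜 ≤ κ := by
  induction h with
  | of_norm Y κ h =>
    calc ∑ k, RCLike.re ⟪f k, Y (e k)⟫_𝕜 ≤ ∑ _k : Fin r, ‖Y‖ := by
          gcongr with k
          refine (re_inner_le_norm _ _).trans ?_
          simpa [he.1 k, hf.1 k] using Y.le_opNorm (e k)
      _ = r * ‖Y‖ := by simp
      _ ≤ n * ‖Y‖ := by gcongr
      _ ≤ κ := h
  | rankOne x y κ h =>
    calc ∑ k, RCLike.re ⟪f k, InnerProductSpace.rankOne 𝕜 x y (e k)⟫_𝕜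
        ≤ ∑ k, ‖⟪f k, x⟫_𝕜‖ * ‖⟪e k, y⟫_𝕜‖ := by
          gcongr with k
          refine (RCLike.re_le_norm _).trans_eq ?_
          rw [rankOne_apply, inner_smul_right, norm_mul, norm_inner_symm, mul_comm]
      _ ≤ ‖x‖ * ‖y‖ := sum_mul_le_of_sum_sq_le (norm_nonneg x) (norm_nonneg y)
          (hf.sum_inner_products_le x) (he.sum_inner_products_le y)
      _ ≤ κ := h
  | add _ _ hX hY =>
    simpa only [add_apply, inner_add_right, map_add, Finset.sum_add_distrib]
      using add_le_add hX hY

theorem of_rank_le [CompleteSpace H] {r : ℕ} (h : (X : H →ₗ[𝕜] H).rank ≤ r) :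
    KyFanBound n X (r * ‖X‖) := by
  set K := LinearMap.range (X : H →ₗ[𝕜] H)
  have : FiniteDimensional 𝕜 K :=
    Module.rank_lt_aleph0_iff.1 (h.trans_lt Cardinal.natCast_lt_aleph0)
  set b := stdOrthonormalBasis 𝕜 K
  have norm_b (i) : ‖(b i : H)‖ = 1 := b.orthonormal.1 i
  have eq_sum : X = ∑ i, InnerProductSpace.rankOne 𝕜 (b i : H) (adjoint X (b i)) := by
    have eq_proj : X = K.starProjection * X := by
      ext x
      exact (Submodule.starProjection_eq_self_iff.2 (LinearMap.mem_range_self _ x)).symm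
    conv_lhs => rw [eq_proj, b.starProjection_eq_sum_rankOne, Finset.sum_mul]
    refine Finset.sum_congr rfl fun i _ ↦ ?_
    ext z
    simp [adjoint_inner_left]
  rw [eq_sum]
  refine (sum fun i _ ↦ rankOne _ _ ‖X‖ ?_).mono ?_
  · simpa [norm_b i] using (adjoint X).le_opNorm (b i)
  · rw [← eq_sum, Finset.sum_const, Finset.card_univ, Fintype.card_fin, nsmul_eq_mul]
    gcongr
    exact Module.finrank_le_of_rank_le h

end KyFanBound

end KyFan

section Rank

theorem rank_span_range_le {K V : Type*} [DivisionRing K] [AddCommGroup V] [Module K V] {k : ℕ}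
    (e : Fin k → V) : Module.rank K (Submodule.span K (Set.range e)) ≤ k := by
  have := FiniteDimensional.span_of_finite K (Set.finite_range e)
  rw [← Module.finrank_eq_rank]
  exact_mod_cast (finrank_range_le_card e).trans_eq (Fintype.card_fin k)

theorem rank_sub_le_add_rank {K V W : Type*} [Field K] [AddCommGroup V] [Module K V]
    [AddCommGroup W] [Module K W] (f g : V →ₗ[K] W) : (f - g).rank ≤ f.rank + g.rank := by
  have rank_neg : (-g).rank = g.rank := by rw [LinearMap.rank, LinearMap.range_neg]
  simpa only [sub_eq_add_neg, rank_neg] using LinearMap.rank_add_le f (-g)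

theorem rank_sub_starProjection_orthogonal_mul_mul_le {𝕜 H : Type*} [RCLike 𝕜]
    [NormedAddCommGroup H] [InnerProductSpace 𝕜 H] (X : H →L[𝕜] H) (K K' : Submodule 𝕜 H)
    [K.HasOrthogonalProjection] [K'.HasOrthogonalProjection] :
    ((X - Kᗮ.starProjection * X * K'ᗮ.starProjection : H →L[𝕜] H) : H →ₗ[𝕜] H).rank ≤
      Module.rank 𝕜 K + Module.rank 𝕜 K' := by
  have range_le : LinearMap.range
      ((X - Kᗮ.starProjection * X * K'ᗮ.starProjection : H →L[𝕜] H) : H →ₗ[𝕜] H) ≤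
      K ⊔ K'.map ((Kᗮ.starProjection * X : H →L[𝕜] H) : H →ₗ[𝕜] H) := by
    rintro _ ⟨x, rfl⟩
    have decomp : (X - Kᗮ.starProjection * X * K'ᗮ.starProjection) x =
        K.starProjection (X x) + (Kᗮ.starProjection * X) (K'.starProjection x) := by
      simp only [Submodule.starProjection_orthogonal, sub_apply, mul_apply_eq_comp, id_apply,
        map_sub]
      abel
    rw [coe_coe, decomp]
    exact Submodule.add_mem_sup (Submodule.starProjection_apply_mem _ _)
      (Submodule.mem_map_of_mem (Submodule.starProjection_apply_mem _ _))
  exact (Submodule.rank_mono range_le).trans <|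
    (Submodule.rank_add_le_rank_add_rank _ _).trans (add_le_add le_rfl (rank_map_le _ _))

end Rank

section SingularValue

variable {H : Type*} [NormedAddCommGroup H] [InnerProductSpace ℂ H] {T X : H →L[ℂ] H} {j : ℕ}

theorem singularValue_le_norm_sub {R : H →L[ℂ] H} (hR : (R : H →ₗ[ℂ] H).rank ≤ j) :
    singularValue T j ≤ ‖T - R‖ :=
  csInf_le ⟨0, by rintro _ ⟨R, -, rfl⟩; positivity⟩ ⟨R, hR, rfl⟩

theorem le_singularValue {r : ℝ} (h : ∀ R : H →L[ℂ] H, (R : H →ₗ[ℂ] H).rank ≤ j → r ≤ ‖T - R‖) :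
    r ≤ singularValue T j :=
  le_csInf ⟨‖T - 0‖, 0, by simp, rfl⟩ (by rintro _ ⟨R, hR, rfl⟩; exact h R hR)

theorem exists_norm_sub_le_singularValue_add (T : H →L[ℂ] H) (j : ℕ) {ε : ℝ} (hε : 0 < ε) :
    ∃ R : H →L[ℂ] H, (R : H →ₗ[ℂ] H).rank ≤ j ∧ ‖T - R‖ ≤ singularValue T j + ε := by
  by_contra! h
  linarith [le_singularValue fun R hR ↦ (h R hR).le]

theorem singularValue_nonneg (T : H →L[ℂ] H) (j : ℕ) : 0 ≤ singularValue T j :=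
  le_singularValue fun _ _ ↦ norm_nonneg _

theorem singularValue_zero (T : H →L[ℂ] H) : singularValue T 0 = ‖T‖ := by
  refine le_antisymm (by simpa using singularValue_le_norm_sub (T := T) (R := 0) (by simp))
    (le_singularValue fun R hR ↦ ?_)
  have hR0 : R = 0 := by
    have hrange : (R : H →ₗ[ℂ] H).rank = 0 := by simpa using hR
    rw [LinearMap.rank, Submodule.rank_eq_zero, LinearMap.range_eq_bot] at hrange
    exact coe_injective hrange
  rw [hR0, sub_zero]

theorem singularValue_antitone (T : H →L[ℂ] H) : Antitone (singularValue T) := fun _ _ hij ↦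
  le_singularValue fun _ hR ↦ singularValue_le_norm_sub (hR.trans (by exact_mod_cast hij))

theorem singularValue_add_le (X Y : H →L[ℂ] H) (j : ℕ) :
    singularValue (X + Y) j ≤ singularValue X j + ‖Y‖ := by
  rw [← sub_le_iff_le_add]
  refine le_singularValue fun R hR ↦ sub_le_iff_le_add.2 ?_
  refine (singularValue_le_norm_sub hR).trans ?_
  rw [add_sub_right_comm]
  exact norm_add_le _ _

theorem exists_unit_orthogonal_le_re_inner {δ : ℝ} (hδ : 0 ≤ δ) (hδX : δ < singularValue X j)
    {K K' : Submodule ℂ H} [K.HasOrthogonalProjection] [K'.HasOrthogonalProjection]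
    (hK : Module.rank ℂ K + Module.rank ℂ K' ≤ j) :
    ∃ y ∈ K'ᗮ, ∃ z ∈ Kᗮ, ‖y‖ = 1 ∧ ‖z‖ = 1 ∧ δ ≤ RCLike.re ⟪z, X y⟫_ℂ := by
  obtain ⟨y, hyK, hy⟩ : ∃ y ∈ K'ᗮ, δ * ‖y‖ < ‖Kᗮ.starProjection (X y)‖ := by
    by_contra! h
    have norm_le : ‖Kᗮ.starProjection * X * K'ᗮ.starProjection‖ ≤ δ := by
      refine opNorm_le_bound _ hδ fun x ↦ (h _ (Submodule.starProjection_apply_mem _ x)).trans ?_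
      gcongr
      exact Submodule.norm_starProjection_apply_le _ _
    have := singularValue_le_norm_sub
      ((rank_sub_starProjection_orthogonal_mul_mul_le X K K').trans hK) (T := X)
    rw [sub_sub_cancel] at this
    linarith
  set z := Kᗮ.starProjection (X y) with hz
  have z_pos : 0 < ‖z‖ := lt_of_le_of_lt (by positivity) hy
  have y_pos : 0 < ‖y‖ := norm_pos_iff.2 fun h0 ↦ by simp [hz, h0] at z_pos
  have re_inner_z : RCLike.re ⟪z, X y⟫_ℂ = ‖z‖ ^ 2 :=
    Submodule.re_inner_starProjection_eq_normSq Kᗮ (X y)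
  refine ⟨((‖y‖⁻¹ : ℝ) : ℂ) • y, Submodule.smul_mem _ _ hyK, ((‖z‖⁻¹ : ℝ) : ℂ) • z,
    Submodule.smul_mem _ _ (Submodule.starProjection_apply_mem _ _), ?_, ?_, ?_⟩
  · simp [norm_smul, y_pos.ne']
  · simp [norm_smul, z_pos.ne']
  · rw [map_smul, inner_smul_left, inner_smul_right, Complex.conj_ofReal]
    simp only [RCLike.re_eq_complex_re, Complex.re_ofReal_mul] at re_inner_z ⊢
    rw [re_inner_z, show ‖z‖⁻¹ * (‖y‖⁻¹ * ‖z‖ ^ 2) = ‖z‖ / ‖y‖ by field_simp,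
      le_div_iff₀ y_pos]
    exact hy.le

theorem exists_orthonormal_le_re_inner {δ : ℝ} (hδ : 0 ≤ δ) (hδX : δ < singularValue X j)
    {k : ℕ} (hk : 2 * k ≤ j + 2) : ∃ e f : Fin k → H, Orthonormal ℂ e ∧ Orthonormal ℂ f ∧
      ∀ i, δ ≤ RCLike.re ⟪f i, X (e i)⟫_ℂ := by
  induction k with
  | zero => exact ⟨Fin.elim0, Fin.elim0, by simp, by simp, Fin.rec0⟩
  | succ k ih =>
    obtain ⟨e, f, he, hf, hef⟩ := ih (by lia)
    have := FiniteDimensional.span_of_finite ℂ (Set.finite_range e)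
    have := FiniteDimensional.span_of_finite ℂ (Set.finite_range f)
    obtain ⟨y, hy, z, hz, norm_y, norm_z, hδyz⟩ := exists_unit_orthogonal_le_re_inner hδ hδX
      ((add_le_add (rank_span_range_le f) (rank_span_range_le e)).trans
        (by exact_mod_cast (by lia : k + k ≤ j)))
    refine ⟨Matrix.vecCons y e, Matrix.vecCons z f,
      orthonormal_vecCons_iff.2 ⟨norm_y, fun i ↦ ?_, he⟩,
      orthonormal_vecCons_iff.2 ⟨norm_z, fun i ↦ ?_, hf⟩, Fin.cases hδyz hef⟩
    · exact Submodule.inner_left_of_mem_orthogonal (Submodule.subset_span (Set.mem_range_self i)) hy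
    · exact Submodule.inner_left_of_mem_orthogonal (Submodule.subset_span (Set.mem_range_self i)) hz

theorem KyFanBound.singularValue_le {κ : ℝ} (h : KyFanBound (j + 1) X κ) :
    (j + 1) * singularValue X j ≤ 2 * κ := by
  rw [← le_div_iff₀' (by positivity)]
  refine le_of_forall_lt_imp_le_of_dense fun δ hδX ↦ ?_
  obtain hδ | hδ := lt_or_ge δ 0
  · exact hδ.le.trans (div_nonneg (by linarith [h.nonneg]) (by positivity))
  obtain ⟨e, f, he, hf, hef⟩ :=
    exists_orthonormal_le_re_inner hδ hδX (k := j / 2 + 1) (by lia)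
  have sum_le : ∑ _i : Fin (j / 2 + 1), δ ≤ κ :=
    (Finset.sum_le_sum fun i _ ↦ hef i).trans (h.sum_re_inner_le (by lia) he hf)
  rw [Finset.sum_const, Finset.card_univ, Fintype.card_fin, nsmul_eq_mul] at sum_le
  have le_card : (j : ℝ) + 1 ≤ 2 * (j / 2 + 1 : ℕ) := by
    exact_mod_cast (by lia : j + 1 ≤ 2 * (j / 2 + 1))
  rw [le_div_iff₀' (by positivity)]
  nlinarith

theorem sum_two_pow_mul_le_two_mul_sum {s : ℕ → ℝ} (hs : Antitone s) (h0 : 0 ≤ s 0) (J : ℕ) :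
    ∑ i ∈ Finset.range (J + 1), 2 ^ i * s (2 ^ i - 1) ≤ 2 * ∑ m ∈ Finset.range (2 ^ J), s m := by
  have condensed := Finset.sum_condensed_le (f := fun k ↦ s (k - 1))
    (fun _ _ _ hmn ↦ hs (Nat.sub_le_sub_right hmn 1)) J
  have sum_Ico : ∑ k ∈ Finset.Ico 2 (2 ^ J + 1), s (k - 1) = ∑ k ∈ Finset.Ico 1 (2 ^ J), s k := by
    rw [← Finset.sum_Ico_add' (fun k ↦ s (k - 1)) 1 (2 ^ J) 1]
    simp
  have sum_split := Finset.sum_range_add_sum_Ico s (Nat.one_le_two_pow (n := J))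
  simp only [nsmul_eq_mul, Nat.cast_pow, Nat.cast_ofNat, sum_Ico, Nat.sub_self] at condensed
  rw [Finset.sum_range_one] at sum_split
  linarith

variable [CompleteSpace H]

theorem exists_rank_le_kyFanBound_dyadic (T : H →L[ℂ] H) (n : ℕ) {ε : ℝ} (hε : 0 < ε) (J : ℕ) :
    ∃ R : H →L[ℂ] H, (R : H →ₗ[ℂ] H).rank ≤ (2 ^ J - 1 : ℕ) ∧
      ‖T - R‖ ≤ singularValue T (2 ^ J - 1) + ε ∧
      KyFanBound n R (6 * ∑ i ∈ Finset.range J, 2 ^ i * (singularValue T (2 ^ i - 1) + ε)) := by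
  induction J with
  | zero => exact ⟨0, by simp, by simp [singularValue_zero, hε.le], by simpa using .zero n⟩
  | succ J ih =>
    obtain ⟨R, rank_R, norm_R, hR⟩ := ih
    obtain ⟨S, rank_S, norm_S⟩ := exists_norm_sub_le_singularValue_add T (2 ^ (J + 1) - 1) hε
    refine ⟨S, rank_S, norm_S, ?_⟩
    set σ := singularValue T (2 ^ J - 1) + ε
    have norm_diff : ‖S - R‖ ≤ 2 * σ := by
      have tri := norm_sub_le (T - R) (T - S)
      rw [sub_sub_sub_cancel_left] at tri
      linarith [singularValue_antitone T (show 2 ^ J - 1 ≤ 2 ^ (J + 1) - 1 by gcongr <;> lia)]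
    have rank_diff : ((S - R : H →L[ℂ] H) : H →ₗ[ℂ] H).rank ≤ (2 ^ (J + 1) - 1 + (2 ^ J - 1) : ℕ) :=
      (rank_sub_le_add_rank _ _).trans (by exact_mod_cast add_le_add rank_S rank_R)
    have rank_count : ((2 ^ (J + 1) - 1 + (2 ^ J - 1) : ℕ) : ℝ) ≤ 3 * 2 ^ J := by
      exact_mod_cast (by lia : 2 ^ (J + 1) - 1 + (2 ^ J - 1) ≤ 3 * 2 ^ J)
    have hS := hR.add (KyFanBound.of_rank_le (n := n) rank_diff)
    rw [add_sub_cancel] at hS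
    refine hS.mono ?_
    calc _ ≤ 6 * ∑ i ∈ Finset.range J, 2 ^ i * (singularValue T (2 ^ i - 1) + ε) +
          3 * 2 ^ J * (2 * σ) := by gcongr
      _ = _ := by rw [Finset.sum_range_succ]; ring

theorem kyFanBound_sum_singularValue (T : H →L[ℂ] H) (n : ℕ) :
    KyFanBound n T (24 * ∑ m ∈ Finset.range n, singularValue T m) := by
  obtain rfl | hT := eq_or_ne T 0
  · exact (KyFanBound.zero n).mono <|
      mul_nonneg (by norm_num) (Finset.sum_nonneg fun i _ ↦ singularValue_nonneg _ i)
  obtain rfl | hn := eq_or_ne n 0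
  · exact KyFanBound.of_norm _ _ (by simp)
  obtain ⟨J, hJ, hJ'⟩ := exists_nat_pow_near (y := 2) (Nat.one_le_iff_ne_zero.2 hn) one_lt_two
  have n_pos : 0 < n := Nat.pos_of_ne_zero hn
  set ε : ℝ := ‖T‖ / n with hε
  have ε_pos : 0 < ε := div_pos (norm_pos_iff.2 hT) (by positivity)
  obtain ⟨R, -, norm_R, hR⟩ := exists_rank_le_kyFanBound_dyadic T n ε_pos J
  have hRT := hR.add (KyFanBound.of_norm (T - R) _ le_rfl)
  rw [add_sub_cancel] at hRT
  refine hRT.mono ?_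
  set s := fun m ↦ singularValue T m + ε
  have s_nonneg (m : ℕ) : 0 ≤ s m := add_nonneg (singularValue_nonneg T m) ε_pos.le
  have remainder : n * ‖T - R‖ ≤ 6 * (2 ^ J * s (2 ^ J - 1)) := by
    calc n * ‖T - R‖ ≤ 2 ^ (J + 1) * s (2 ^ J - 1) := by gcongr; exact_mod_cast hJ'.le
      _ ≤ 6 * (2 ^ J * s (2 ^ J - 1)) := by
        rw [pow_succ']
        linarith [mul_nonneg (pow_nonneg (zero_le_two (α := ℝ)) J) (s_nonneg (2 ^ J - 1))]
  have sum_mono : ∑ m ∈ Finset.range (2 ^ J), s m ≤ ∑ m ∈ Finset.range n, s m :=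
    Finset.sum_le_sum_of_subset_of_nonneg (by simpa using hJ) fun m _ _ ↦ s_nonneg m
  have sum_s : ∑ m ∈ Finset.range n, s m = ∑ m ∈ Finset.range n, singularValue T m + ‖T‖ := by
    rw [Finset.sum_add_distrib, Finset.sum_const, Finset.card_range, nsmul_eq_mul, hε,
      mul_div_cancel₀ _ (by positivity)]
  have norm_le : ‖T‖ ≤ ∑ m ∈ Finset.range n, singularValue T m := by
    rw [← singularValue_zero]
    exact Finset.single_le_sum (fun i _ ↦ singularValue_nonneg T i) (by simpa using n_pos)
  have condensed := sum_two_pow_mul_le_two_mul_sum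
    ((singularValue_antitone T).add_const ε) (s_nonneg 0) J
  rw [Finset.sum_range_succ] at condensed
  linarith

end SingularValue

section RootsOfUnity

variable {N : ℕ} {ω : ℂ}

theorem conj_mul_self_of_norm_eq_one {z : ℂ} (hz : ‖z‖ = 1) : conj z * z = 1 := by
  simp [Complex.conj_mul', hz]

theorem sum_rootOfUnity_pow_mul_conj_pow (hω : IsPrimitiveRoot ω N) {l m : ℕ} (hl : l < N)
    (hm : m < N) :
    ∑ k ∈ Finset.range N, (ω ^ k) ^ l * conj ((ω ^ k) ^ m) = if l = m then (N : ℂ) else 0 := by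
  have conj_mul : conj ω * ω = 1 := conj_mul_self_of_norm_eq_one (hω.norm'_eq_one (by lia))
  have term_eq (k : ℕ) : (ω ^ k) ^ l * conj ((ω ^ k) ^ m) = (ω ^ l * conj ω ^ m) ^ k := by
    simp only [map_pow]
    ring
  simp_rw [term_eq]
  split_ifs with hlm
  · subst hlm
    simp [← mul_pow, mul_comm ω, conj_mul]
  · have ratio_ne_one : ω ^ l * conj ω ^ m ≠ 1 := fun h ↦ hlm <| hω.pow_inj hl hm <| by
      calc ω ^ l = ω ^ l * (conj ω * ω) ^ m := by rw [conj_mul, one_pow, mul_one]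
        _ = (ω ^ l * conj ω ^ m) * ω ^ m := by ring
        _ = ω ^ m := by rw [h, one_mul]
    have ratio_pow : (ω ^ l * conj ω ^ m) ^ N = 1 := by
      calc (ω ^ l * conj ω ^ m) ^ N = (ω ^ N) ^ l * conj (ω ^ N) ^ m := by rw [map_pow]; ring
        _ = 1 := by simp [hω.pow_eq_one]
    rw [geom_sum_eq ratio_ne_one, ratio_pow, sub_self, zero_div]

theorem sum_norm_sq_rootOfUnity (hω : IsPrimitiveRoot ω N) {L : ℕ} (hL : L ≤ N) (c : ℕ → ℂ) :
    ∑ k ∈ Finset.range N, ‖∑ l ∈ Finset.range L, c l * (ω ^ k) ^ l‖ ^ 2 =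
      N * ∑ l ∈ Finset.range L, ‖c l‖ ^ 2 := by
  apply Complex.ofReal_injective
  push_cast
  simp_rw [← Complex.mul_conj', map_sum, Finset.sum_mul_sum]
  rw [Finset.sum_comm, Finset.mul_sum]
  refine Finset.sum_congr rfl fun l hl ↦ ?_
  rw [Finset.sum_comm]
  calc ∑ m ∈ Finset.range L, ∑ k ∈ Finset.range N, c l * (ω ^ k) ^ l * conj (c m * (ω ^ k) ^ m)
      = ∑ m ∈ Finset.range L, c l * conj (c m) * if l = m then (N : ℂ) else 0 := by
        refine Finset.sum_congr rfl fun m hm ↦ ?_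
        rw [Finset.mem_range] at hl hm
        rw [← sum_rootOfUnity_pow_mul_conj_pow hω (hl.trans_le hL) (hm.trans_le hL),
          Finset.mul_sum]
        refine Finset.sum_congr rfl fun k _ ↦ ?_
        rw [map_mul]
        ring
    _ = N * (c l * conj (c l)) := by simp [Finset.mem_range.1 hl, mul_comm]

theorem sum_norm_sq_mul_rootOfUnity (hω : IsPrimitiveRoot ω N) {L : ℕ} (hL : L ≤ N) {ξ : ℂ}
    (hξ : ‖ξ‖ = 1) (c : ℕ → ℂ) :
    ∑ k ∈ Finset.range N, ‖∑ l ∈ Finset.range L, c l * (ξ * ω ^ k) ^ l‖ ^ 2 =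
      N * ∑ l ∈ Finset.range L, ‖c l‖ ^ 2 := by
  simpa [mul_pow, mul_assoc, hξ] using sum_norm_sq_rootOfUnity hω hL fun l ↦ c l * ξ ^ l

end RootsOfUnity

section Bernstein

variable {N : ℕ} {P : ℂ[X]} {M : ℝ} {z : ℂ}

theorem aeval_sub_aeval_eq_sum_iterate_divX {R A : Type*} [CommRing R] [Ring A] [Algebra R A]
    (a b : A) {P : R[X]} {N : ℕ} (hP : P.natDegree ≤ N) :
    aeval a P - aeval b P =
      ∑ l ∈ Finset.range N, aeval a (divX^[l + 1] P) * (a - b) * b ^ l := by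
  induction N generalizing P with
  | zero =>
    rw [eq_C_of_natDegree_le_zero hP]
    simp
  | succ N ih =>
    have aeval_eq (x : A) : aeval x P = aeval x P.divX * x + algebraMap R A (P.coeff 0) := by
      conv_lhs => rw [← divX_mul_X_add P]
      simp
    have tail : ∑ l ∈ Finset.range N, aeval a (divX^[l + 1 + 1] P) * (a - b) * b ^ (l + 1) =
        (aeval a P.divX - aeval b P.divX) * b := by
      rw [ih (by rw [natDegree_divX_eq_natDegree_tsub_one]; lia), Finset.sum_mul]
      refine Finset.sum_congr rfl fun l _ ↦ ?_
      rw [Function.iterate_succ_apply divX (l + 1) P, pow_succ, mul_assoc, mul_assoc, mul_assoc]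
    rw [Finset.sum_range_succ', tail, aeval_eq a, aeval_eq b]
    simp only [zero_add, Function.iterate_one, pow_zero, mul_one]
    noncomm_ring

theorem norm_sum_iterate_divX_mul_pow_le (hP : P.natDegree ≤ N)
    (hM : ∀ z : ℂ, ‖z‖ = 1 → ‖P.eval z‖ ≤ M) (hz : ‖z‖ = 1) {ζ : ℂ} (hζ : ‖ζ‖ = 1)
    (hζN : ζ ^ N = -z ^ N) :
    ‖∑ l ∈ Finset.range N, (divX^[l + 1] P).eval z * ζ ^ l‖ ≤
      M * ‖∑ l ∈ Finset.range N, z ^ (N - 1 - l) * ζ ^ l‖ := by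
  have mul_sub_eq : (∑ l ∈ Finset.range N, (divX^[l + 1] P).eval z * ζ ^ l) * (z - ζ) =
      P.eval z - P.eval ζ := by
    rw [← coe_aeval_eq_eval, ← coe_aeval_eq_eval, aeval_sub_aeval_eq_sum_iterate_divX z ζ hP,
      Finset.sum_mul]
    refine Finset.sum_congr rfl fun l _ ↦ ?_
    rw [coe_aeval_eq_eval]
    ring
  have geom_mul_sub : (∑ l ∈ Finset.range N, z ^ (N - 1 - l) * ζ ^ l) * (z - ζ) = 2 * z ^ N := by
    have geom := (Commute.all ζ z).geom_sum₂_mul N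
    simp_rw [mul_comm (ζ ^ _), hζN] at geom
    linear_combination -geom
  have norm_geom : ‖∑ l ∈ Finset.range N, z ^ (N - 1 - l) * ζ ^ l‖ * ‖z - ζ‖ = 2 := by
    rw [← norm_mul, geom_mul_sub]
    simp [hz]
  have dist_pos : 0 < ‖z - ζ‖ := by
    refine (norm_nonneg _).lt_of_ne fun h ↦ ?_
    rw [← h] at norm_geom
    norm_num at norm_geom
  refine le_of_mul_le_mul_right ?_ dist_pos
  rw [mul_assoc, norm_geom, ← norm_mul, mul_sub_eq]
  linarith [norm_sub_le (P.eval z) (P.eval ζ), hM z hz, hM ζ hζ]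

-- Average the preceding estimate over the `N` roots `ζ` of `ζ ^ N = -z ^ N`; by Parseval both
-- sides become sums of squares of coefficients.
theorem sum_norm_eval_iterate_divX_sq_le (hP : P.natDegree ≤ N)
    (hM : ∀ z : ℂ, ‖z‖ = 1 → ‖P.eval z‖ ≤ M) (hz : ‖z‖ = 1) :
    ∑ l ∈ Finset.range N, ‖(divX^[l + 1] P).eval z‖ ^ 2 ≤ M ^ 2 * N := by
  obtain rfl | hN := Nat.eq_zero_or_pos N
  · simp
  have hω := Complex.isPrimitiveRoot_exp N hN.ne'
  set ω := Complex.exp (2 * Real.pi * Complex.I / N)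
  obtain ⟨ξ, hξ⟩ := IsAlgClosed.exists_pow_nat_eq (-z ^ N) hN
  have norm_ξ : ‖ξ‖ = 1 := by
    rw [← pow_eq_one_iff_of_nonneg (norm_nonneg ξ) hN.ne', ← norm_pow, hξ, norm_neg, norm_pow, hz,
      one_pow]
  have norm_ω : ‖ω‖ = 1 := hω.norm'_eq_one hN.ne'
  have pointwise : ∀ k ∈ Finset.range N,
      ‖∑ l ∈ Finset.range N, (divX^[l + 1] P).eval z * (ξ * ω ^ k) ^ l‖ ^ 2 ≤
        M ^ 2 * ‖∑ l ∈ Finset.range N, z ^ (N - 1 - l) * (ξ * ω ^ k) ^ l‖ ^ 2 := fun k _ ↦ by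
    rw [← mul_pow]
    gcongr
    refine norm_sum_iterate_divX_mul_pow_le hP hM hz (by simp [norm_ξ, norm_ω]) ?_
    rw [mul_pow, hξ, pow_right_comm, hω.pow_eq_one, one_pow, mul_one]
  have averaged := Finset.sum_le_sum pointwise
  rw [← Finset.mul_sum, sum_norm_sq_mul_rootOfUnity hω le_rfl norm_ξ,
    sum_norm_sq_mul_rootOfUnity hω le_rfl norm_ξ] at averaged
  refine le_of_mul_le_mul_left (averaged.trans_eq ?_) (Nat.cast_pos.2 hN)
  simp only [norm_pow, hz, one_pow, Finset.sum_const, Finset.card_range, nsmul_eq_mul, mul_one]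
  ring

end Bernstein

/-- The trigonometric polynomial `a ↦ (a*) ^ m * P(a)`. On unitary `a` this is the Laurent
polynomial `a ^ (-m) * P(a)`; if `P` has degree at most `2 * m`, all its frequencies lie in
`[-m, m]`. -/
noncomputable def trigEval {A : Type*} [Ring A] [StarRing A] [Algebra ℂ A] (m : ℕ) (P : ℂ[X])
    (a : A) : A :=
  star a ^ m * aeval a P

section Jackson

theorem trigEval_complex (m : ℕ) (P : ℂ[X]) (z : ℂ) :
    trigEval m P z = conj z ^ m * P.eval z := by
  rw [trigEval, coe_aeval_eq_eval, RCLike.star_def]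

theorem rpow_le_one_add_sq {t α : ℝ} (ht : 0 ≤ t) (h0 : 0 ≤ α) (h1 : α ≤ 2) :
    t ^ α ≤ 1 + t ^ 2 := by
  obtain h | h := le_total t 1
  · linarith [Real.rpow_le_one ht h h0, sq_nonneg t]
  · have := Real.rpow_le_rpow_of_exponent_le h h1
    rw [Real.rpow_two] at this
    linarith

theorem sum_mul_rpow_le_of_sum_mul_sq_le {ι : Type*} {s : Finset ι} {w d : ι → ℝ} {α K n : ℝ}
    (hw : ∀ i ∈ s, 0 ≤ w i) (hw1 : ∑ i ∈ s, w i = 1) (hd : ∀ i ∈ s, 0 ≤ d i) (hα0 : 0 ≤ α)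
    (hα2 : α ≤ 2) (hn : 0 < n) (hK : n ^ 2 * ∑ i ∈ s, w i * d i ^ 2 ≤ K) :
    ∑ i ∈ s, w i * d i ^ α ≤ (1 + K) * n ^ (-α) := by
  have scaled : ∀ i ∈ s, d i ^ α ≤ (1 + (n * d i) ^ 2) * n ^ (-α) := fun i hi ↦ by
    rw [Real.rpow_neg hn.le, ← div_eq_mul_inv, le_div_iff₀ (by positivity), mul_comm,
      ← Real.mul_rpow hn.le (hd i hi)]
    exact rpow_le_one_add_sq (mul_nonneg hn.le (hd i hi)) hα0 hα2
  calc ∑ i ∈ s, w i * d i ^ α ≤ ∑ i ∈ s, w i * ((1 + (n * d i) ^ 2) * n ^ (-α)) :=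
        Finset.sum_le_sum fun i hi ↦ mul_le_mul_of_nonneg_left (scaled i hi) (hw i hi)
    _ = (∑ i ∈ s, w i + n ^ 2 * ∑ i ∈ s, w i * d i ^ 2) * n ^ (-α) := by
        rw [Finset.mul_sum, ← Finset.sum_add_distrib, Finset.sum_mul]
        exact Finset.sum_congr rfl fun i _ ↦ by ring
    _ ≤ (1 + K) * n ^ (-α) := by
        rw [hw1]
        gcongr

/-- The Dirichlet polynomial `1 + X + ⋯ + X ^ m`, whose fourth power is the Jackson kernel. -/
noncomputable def dirichletPoly (m : ℕ) : ℂ[X] :=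
  ∑ k ∈ Finset.range (m + 1), X ^ k

variable {m : ℕ} {ω z : ℂ}

theorem eval_dirichletPoly (m : ℕ) (x : ℂ) :
    (dirichletPoly m).eval x = ∑ k ∈ Finset.range (m + 1), x ^ k := by
  simp [dirichletPoly, eval_finsetSum]

theorem natDegree_dirichletPoly_le (m : ℕ) : (dirichletPoly m).natDegree ≤ m :=
  natDegree_sum_le_of_forall_le _ _ fun k hk ↦ by
    rw [natDegree_X_pow]
    exact Nat.lt_succ_iff.1 (Finset.mem_range.1 hk)

theorem norm_eval_dirichletPoly_mul_le {x : ℂ} (hx : ‖x‖ = 1) :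
    ‖(dirichletPoly m).eval x‖ * ‖x - 1‖ ≤ 2 := by
  rw [← norm_mul, eval_dirichletPoly, geom_sum_mul]
  refine (norm_sub_le _ _).trans ?_
  rw [norm_pow, hx]
  norm_num

theorem conj_eval_dirichletPoly {x : ℂ} (hx : ‖x‖ = 1) :
    conj ((dirichletPoly m).eval x) = conj x ^ m * (dirichletPoly m).eval x := by
  rw [eval_dirichletPoly, map_sum, Finset.mul_sum, ← Finset.sum_range_reflect]
  refine Finset.sum_congr rfl fun k hk ↦ ?_
  have hk : k ≤ m := Nat.lt_succ_iff.1 (Finset.mem_range.1 hk)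
  rw [Nat.add_sub_cancel, map_pow, ← Nat.sub_add_cancel hk, pow_add, Nat.add_sub_cancel, mul_assoc,
    ← mul_pow, conj_mul_self_of_norm_eq_one hx, one_pow, mul_one]

theorem conj_pow_mul_eval_dirichletPoly_pow {x : ℂ} (hx : ‖x‖ = 1) :
    conj x ^ (2 * m) * (dirichletPoly m).eval x ^ 4 =
      ((‖(dirichletPoly m).eval x‖ ^ 4 : ℝ) : ℂ) := by
  have norm_pow_four : ((‖(dirichletPoly m).eval x‖ ^ 4 : ℝ) : ℂ) =
      (conj ((dirichletPoly m).eval x) * (dirichletPoly m).eval x) ^ 2 := by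
    rw [Complex.conj_mul']
    push_cast
    ring
  rw [norm_pow_four, conj_eval_dirichletPoly hx]
  ring

theorem sum_norm_eval_dirichletPoly_sq {N : ℕ} (hω : IsPrimitiveRoot ω N) (hN : m + 1 ≤ N)
    (hz : ‖z‖ = 1) :
    ∑ j ∈ Finset.range N, ‖(dirichletPoly m).eval (z * ω ^ j)‖ ^ 2 = N * (m + 1) := by
  simpa [eval_dirichletPoly] using sum_norm_sq_mul_rootOfUnity hω hN hz fun _ ↦ 1

/-- The total mass of the discrete Jackson kernel with nodes `ω ^ j`. -/
noncomputable def jacksonMass (m : ℕ) (ω : ℂ) : ℝ :=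
  ∑ j ∈ Finset.range (2 * (m + 1)), ‖(dirichletPoly m).eval (ω ^ j)‖ ^ 4

theorem sum_norm_eval_dirichletPoly_pow_four (hω : IsPrimitiveRoot ω (2 * (m + 1)))
    (hz : ‖z‖ = 1) :
    ∑ j ∈ Finset.range (2 * (m + 1)), ‖(dirichletPoly m).eval (z * ω ^ j)‖ ^ 4 =
      jacksonMass m ω := by
  have eval_sq (x : ℂ) : ‖(dirichletPoly m).eval x‖ ^ 4 =
      ‖∑ l ∈ Finset.range (2 * (m + 1)), (dirichletPoly m ^ 2).coeff l * x ^ l‖ ^ 2 := by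
    rw [← eval_eq_sum_range', eval_pow, norm_pow, ← pow_mul]
    linarith [natDegree_pow_le_of_le 2 (natDegree_dirichletPoly_le m)]
  simp_rw [jacksonMass, eval_sq]
  rw [sum_norm_sq_mul_rootOfUnity hω le_rfl hz, sum_norm_sq_rootOfUnity hω le_rfl]

theorem pow_four_le_jacksonMass (m : ℕ) (ω : ℂ) : ((m : ℝ) + 1) ^ 4 ≤ jacksonMass m ω := by
  have term_zero : ‖(dirichletPoly m).eval (ω ^ 0)‖ ^ 4 = ((m : ℝ) + 1) ^ 4 := by
    rw [pow_zero, eval_dirichletPoly]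
    simp only [one_pow, Finset.sum_const, Finset.card_range, nsmul_eq_mul, mul_one]
    rw [Complex.norm_natCast]
    push_cast
    rfl
  rw [← term_zero]
  exact Finset.single_le_sum (f := fun j ↦ ‖(dirichletPoly m).eval (ω ^ j)‖ ^ 4)
    (fun j _ ↦ by positivity) (by simp)

/-- The Jackson approximant of `F` of order `2 * m`, as the polynomial factor of a `trigEval`. -/
noncomputable def jacksonPoly (F : ℂ → ℂ) (m : ℕ) (ω : ℂ) : ℂ[X] :=
  ∑ j ∈ Finset.range (2 * (m + 1)),
    C (F (conj (ω ^ j)) * conj (ω ^ j) ^ (2 * m) / jacksonMass m ω) *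
      ((dirichletPoly m).comp (C (ω ^ j) * X)) ^ 4

theorem natDegree_jacksonPoly_le (F : ℂ → ℂ) (m : ℕ) (ω : ℂ) :
    (jacksonPoly F m ω).natDegree ≤ 4 * m :=
  natDegree_sum_le_of_forall_le _ _ fun _ _ ↦
    (natDegree_C_mul_le _ _).trans <| natDegree_pow_le_of_le 4 <| natDegree_comp_le.trans <|
      (Nat.mul_le_mul (natDegree_dirichletPoly_le m)
        ((natDegree_C_mul_le _ _).trans natDegree_X_le)).trans_eq (mul_one m)

theorem trigEval_jacksonPoly (F : ℂ → ℂ) (hω : ‖ω‖ = 1) (hz : ‖z‖ = 1) :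
    trigEval (2 * m) (jacksonPoly F m ω) z = ∑ j ∈ Finset.range (2 * (m + 1)),
      (‖(dirichletPoly m).eval (z * ω ^ j)‖ ^ 4 / jacksonMass m ω) • F (conj (ω ^ j)) := by
  rw [trigEval_complex, jacksonPoly, eval_finsetSum, Finset.mul_sum]
  refine Finset.sum_congr rfl fun j _ ↦ ?_
  have kernel := conj_pow_mul_eval_dirichletPoly_pow (m := m) (x := z * ω ^ j) (by simp [hz, hω])
  rw [map_mul, mul_pow] at kernel
  rw [Complex.real_smul, Complex.ofReal_div, ← kernel]
  simp only [eval_mul, eval_C, eval_pow, eval_comp, eval_X, mul_comm (ω ^ j) z]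
  ring

theorem norm_eval_dirichletPoly_pow_four_mul_le (hω : ‖ω‖ = 1) (hz : ‖z‖ = 1) (j : ℕ) :
    ‖(dirichletPoly m).eval (z * ω ^ j)‖ ^ 4 * ‖z - conj (ω ^ j)‖ ^ 2 ≤
      4 * ‖(dirichletPoly m).eval (z * ω ^ j)‖ ^ 2 := by
  have norm_node : ‖z - conj (ω ^ j)‖ = ‖z * ω ^ j - 1‖ := by
    rw [← conj_mul_self_of_norm_eq_one (z := ω ^ j) (by simp [hω]), ← sub_mul, norm_mul,
      norm_pow, hω, one_pow, mul_one]
  have decay := norm_eval_dirichletPoly_mul_le (m := m) (x := z * ω ^ j) (by simp [hz, hω])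
  rw [norm_node]
  set D := ‖(dirichletPoly m).eval (z * ω ^ j)‖
  calc D ^ 4 * ‖z * ω ^ j - 1‖ ^ 2 = D ^ 2 * (D * ‖z * ω ^ j - 1‖) ^ 2 := by ring
    _ ≤ D ^ 2 * 2 ^ 2 := by gcongr
    _ = 4 * D ^ 2 := by ring

theorem sq_mul_sum_jackson_weight_mul_sq_le (hω : IsPrimitiveRoot ω (2 * (m + 1)))
    (hz : ‖z‖ = 1) : ((m : ℝ) + 1) ^ 2 * ∑ j ∈ Finset.range (2 * (m + 1)),
      ‖(dirichletPoly m).eval (z * ω ^ j)‖ ^ 4 / jacksonMass m ω * ‖z - conj (ω ^ j)‖ ^ 2 ≤ 8 := by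
  have mass_ge := pow_four_le_jacksonMass m ω
  have mass_pos : 0 < jacksonMass m ω := lt_of_lt_of_le (by positivity) mass_ge
  have second_moment : ∑ j ∈ Finset.range (2 * (m + 1)),
      ‖(dirichletPoly m).eval (z * ω ^ j)‖ ^ 4 * ‖z - conj (ω ^ j)‖ ^ 2 ≤ 8 * (m + 1) ^ 2 := by
    refine (Finset.sum_le_sum fun j _ ↦ norm_eval_dirichletPoly_pow_four_mul_le
      (hω.norm'_eq_one (by lia)) hz j).trans_eq ?_
    rw [← Finset.mul_sum, sum_norm_eval_dirichletPoly_sq hω (by lia) hz]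
    push_cast
    ring
  simp_rw [div_mul_eq_mul_div]
  rw [← Finset.sum_div, ← mul_div_assoc, div_le_iff₀ mass_pos]
  calc _ ≤ ((m : ℝ) + 1) ^ 2 * (8 * (m + 1) ^ 2) := by gcongr
    _ = 8 * ((m : ℝ) + 1) ^ 4 := by ring
    _ ≤ 8 * jacksonMass m ω := by gcongr

theorem exists_norm_sub_trigEval_le {F : ℂ → ℂ} {L α : ℝ≥0} (hα : α ≤ 2)
    (hF : HolderOnWith L α F (Metric.sphere 0 1)) (m : ℕ) :
    ∃ P : ℂ[X], P.natDegree ≤ 4 * m ∧ ∀ z : ℂ, ‖z‖ = 1 →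
      ‖F z - trigEval (2 * m) P z‖ ≤ 9 * L * ((m : ℝ) + 1) ^ (-α : ℝ) := by
  have hω := Complex.isPrimitiveRoot_exp (2 * (m + 1)) (by lia)
  set ω := Complex.exp (2 * Real.pi * Complex.I / (2 * (m + 1) : ℕ))
  have norm_ω : ‖ω‖ = 1 := hω.norm'_eq_one (by lia)
  have mass_pos : 0 < jacksonMass m ω :=
    lt_of_lt_of_le (by positivity) (pow_four_le_jacksonMass m ω)
  refine ⟨jacksonPoly F m ω, natDegree_jacksonPoly_le F m ω, fun z hz ↦ ?_⟩
  set w : ℕ → ℝ := fun j ↦ ‖(dirichletPoly m).eval (z * ω ^ j)‖ ^ 4 / jacksonMass m ω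
  have w_nonneg (j : ℕ) : 0 ≤ w j := by positivity
  have sum_w : ∑ j ∈ Finset.range (2 * (m + 1)), w j = 1 := by
    rw [← Finset.sum_div, sum_norm_eval_dirichletPoly_pow_four hω hz, div_self mass_pos.ne']
  have holder (j : ℕ) : ‖F z - F (conj (ω ^ j))‖ ≤ L * ‖z - conj (ω ^ j)‖ ^ (α : ℝ) := by
    simpa only [dist_eq_norm] using
      hF.dist_le (mem_sphere_zero_iff_norm.2 hz) (mem_sphere_zero_iff_norm.2 (by simp [norm_ω]))
  calc ‖F z - trigEval (2 * m) (jacksonPoly F m ω) z‖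
      = ‖∑ j ∈ Finset.range (2 * (m + 1)), w j • (F z - F (conj (ω ^ j)))‖ := by
        simp_rw [smul_sub]
        rw [Finset.sum_sub_distrib, ← Finset.sum_smul, sum_w, one_smul,
          trigEval_jacksonPoly F norm_ω hz]
    _ ≤ ∑ j ∈ Finset.range (2 * (m + 1)), w j * (L * ‖z - conj (ω ^ j)‖ ^ (α : ℝ)) :=
        norm_sum_le_of_le _ fun j _ ↦ by
          rw [norm_smul, Real.norm_of_nonneg (w_nonneg j)]
          exact mul_le_mul_of_nonneg_left (holder j) (w_nonneg j)
    _ = L * ∑ j ∈ Finset.range (2 * (m + 1)), w j * ‖z - conj (ω ^ j)‖ ^ (α : ℝ) := by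
        simp_rw [Finset.mul_sum, mul_left_comm]
    _ ≤ L * ((1 + 8) * ((m : ℝ) + 1) ^ (-α : ℝ)) := by
        gcongr
        exact sum_mul_rpow_le_of_sum_mul_sq_le (fun j _ ↦ w_nonneg j) sum_w
          (fun j _ ↦ norm_nonneg _) α.2 hα (by positivity)
          (sq_mul_sum_jackson_weight_mul_sq_le hω hz)
    _ = 9 * L * ((m : ℝ) + 1) ^ (-α : ℝ) := by ring

end Jackson

section Unitary

variable {A : Type*} [CStarAlgebra A] {U : A} {F : ℂ → ℂ} {P : ℂ[X]} {M : ℝ}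

theorem trigEval_eq_cfc (hU : U ∈ unitary A) (m : ℕ) (P : ℂ[X]) :
    trigEval m P U = cfc (trigEval m P : ℂ → ℂ) U := by
  have := isStarNormal_of_mem_unitary hU
  unfold trigEval
  simp only [coe_aeval_eq_eval]
  rw [cfc_mul (fun z ↦ star z ^ m) (fun z ↦ P.eval z) U, cfc_polynomial P U,
    cfc_pow (fun z : ℂ ↦ star z) m U, cfc_star_id U]

theorem aeval_eq_cfc_of_mem_unitary (hU : U ∈ unitary A) (P : ℂ[X]) :
    aeval U P = cfc P.eval U :=
  (cfc_polynomial P U (isStarNormal_of_mem_unitary hU)).symm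

theorem norm_cfc_le_of_mem_unitary (hU : U ∈ unitary A) (hF : ∀ z, ‖z‖ = 1 → ‖F z‖ ≤ M) :
    ‖cfc F U‖ ≤ M :=
  norm_cfc_le ((norm_nonneg _).trans (hF 1 norm_one)) fun _ hz ↦
    hF _ (spectrum.norm_eq_one_of_unitary hU hz)

theorem norm_trigEval_complex {z : ℂ} (hz : ‖z‖ = 1) (m : ℕ) (P : ℂ[X]) :
    ‖trigEval m P z‖ = ‖P.eval z‖ := by
  simp [trigEval_complex, hz]

theorem norm_trigEval_le (hU : U ∈ unitary A) (hM : ∀ z, ‖z‖ = 1 → ‖P.eval z‖ ≤ M) (m : ℕ) :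
    ‖trigEval m P U‖ ≤ M := by
  rw [trigEval_eq_cfc hU]
  exact norm_cfc_le_of_mem_unitary hU fun z hz ↦ (norm_trigEval_complex hz m P).trans_le (hM z hz)

theorem norm_le_one_of_mem_unitary (hU : U ∈ unitary A) : ‖U‖ ≤ 1 := by
  simpa [trigEval] using norm_trigEval_le hU (P := X) (M := 1) (by simp +contextual) 0

end Unitary

section TrigEval

variable {A : Type*} [Ring A] [StarRing A] [Algebra ℂ A]

theorem trigEval_add_X_pow_mul {a : A} (ha : star a * a = 1) (m d : ℕ) (P : ℂ[X]) :
    trigEval (m + d) (X ^ d * P) a = trigEval m P a := by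
  have cancel : star a ^ d * a ^ d = 1 := pow_mul_pow_eq_one d ha
  simp only [trigEval, map_mul, map_pow, aeval_X]
  rw [pow_add, mul_assoc, ← mul_assoc (star a ^ d), cancel, one_mul]

theorem trigEval_sub_X_pow_mul {a : A} (ha : star a * a = 1) (m d : ℕ) (P Q : ℂ[X]) :
    trigEval (m + d) (Q - X ^ d * P) a = trigEval (m + d) Q a - trigEval m P a := by
  rw [← trigEval_add_X_pow_mul ha m d, trigEval, map_sub, mul_sub, ← trigEval, ← trigEval]

end TrigEval

section OperatorBernstein

variable {H : Type*} [NormedAddCommGroup H] [InnerProductSpace ℂ H] [CompleteSpace H]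
  {U V : H →L[ℂ] H} {P : ℂ[X]} {M κ : ℝ} {n N : ℕ}

theorem sum_norm_apply_sq_le {ι : Type*} (s : Finset ι) (u : ι → H →L[ℂ] H) (x : H) :
    ∑ l ∈ s, ‖u l x‖ ^ 2 ≤ ‖∑ l ∈ s, star (u l) * u l‖ * ‖x‖ ^ 2 := by
  have norm_sq_eq (l : ι) : ‖u l x‖ ^ 2 = RCLike.re ⟪x, (star (u l) * u l) x⟫_ℂ := by
    rw [mul_apply_eq_comp, star_eq_adjoint, adjoint_inner_right, inner_self_eq_norm_sq]
  simp_rw [norm_sq_eq]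
  rw [← map_sum, ← inner_sum, ← sum_apply]
  calc RCLike.re ⟪x, (∑ l ∈ s, star (u l) * u l) x⟫_ℂ
      ≤ ‖x‖ * ‖(∑ l ∈ s, star (u l) * u l) x‖ := re_inner_le_norm _ _
    _ ≤ ‖x‖ * (‖∑ l ∈ s, star (u l) * u l‖ * ‖x‖) := by gcongr; exact le_opNorm _ x
    _ = _ := by ring

theorem norm_sum_star_mul_aeval_iterate_divX_le (hU : U ∈ unitary (H →L[ℂ] H))
    (hP : P.natDegree ≤ N) (hM : ∀ z, ‖z‖ = 1 → ‖P.eval z‖ ≤ M) :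
    ‖∑ l ∈ Finset.range N, star (aeval U (divX^[l + 1] P)) * aeval U (divX^[l + 1] P)‖ ≤
      M ^ 2 * N := by
  have star_mul_aeval (q : ℂ[X]) :
      star (aeval U q) * aeval U q = cfc (fun z ↦ star (q.eval z) * q.eval z) U := by
    rw [aeval_eq_cfc_of_mem_unitary hU, ← cfc_star, ← cfc_mul ..]
  simp_rw [star_mul_aeval]
  rw [← cfc_sum _ U _ (fun _ _ ↦ by fun_prop)]
  refine norm_cfc_le_of_mem_unitary hU fun z hz ↦ ?_
  rw [Finset.sum_apply]
  refine (norm_sum_le _ _).trans ?_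
  simpa only [norm_mul, norm_star, ← sq] using sum_norm_eval_iterate_divX_sq_le hP hM hz

theorem SquareFunctionBound.aeval_iterate_divX (hU : U ∈ unitary (H →L[ℂ] H))
    (hP : P.natDegree ≤ N) (hM : ∀ z, ‖z‖ = 1 → ‖P.eval z‖ ≤ M) :
    SquareFunctionBound (Finset.range N) (fun l ↦ aeval U (divX^[l + 1] P)) (M * √N) := by
  have hM₀ : 0 ≤ M := (norm_nonneg _).trans (hM 1 norm_one)
  refine .of_isStarNormal (fun l _ ↦ ?_) (by positivity) fun x ↦ ?_
  · rw [aeval_eq_cfc_of_mem_unitary hU]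
    infer_instance
  · calc _ ≤ _ * ‖x‖ ^ 2 := sum_norm_apply_sq_le _ _ x
      _ ≤ M ^ 2 * N * ‖x‖ ^ 2 := by
        gcongr
        exact norm_sum_star_mul_aeval_iterate_divX_le hU hP hM
      _ = (M * √N * ‖x‖) ^ 2 := by rw [mul_pow, mul_pow, Real.sq_sqrt N.cast_nonneg]

theorem SquareFunctionBound.pow_of_mem_unitary (hV : V ∈ unitary (H →L[ℂ] H)) (N : ℕ) :
    SquareFunctionBound (Finset.range N) (fun l ↦ V ^ l) √N := by
  refine .of_isStarNormal (fun l _ ↦ isStarNormal_of_mem_unitary (pow_mem hV l)) (by positivity)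
    fun x ↦ ?_
  have norm_pow_apply (l : ℕ) : ‖(V ^ l) x‖ = ‖x‖ := norm_map_of_mem_unitary (pow_mem hV l) x
  simp only [norm_pow_apply, mul_pow, Real.sq_sqrt N.cast_nonneg, Finset.sum_const,
    Finset.card_range, nsmul_eq_mul, le_refl]

namespace KyFanBound

theorem aeval_sub_aeval (hU : U ∈ unitary (H →L[ℂ] H)) (hV : V ∈ unitary (H →L[ℂ] H))
    (hP : P.natDegree ≤ N) (hM : ∀ z, ‖z‖ = 1 → ‖P.eval z‖ ≤ M) (h : KyFanBound n (U - V) κ) :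
    KyFanBound n (aeval U P - aeval V P) (N * M * κ) := by
  rw [aeval_sub_aeval_eq_sum_iterate_divX U V hP]
  refine (h.sum_mul_mul (.aeval_iterate_divX hU hP hM) (.pow_of_mem_unitary hV N)).mono ?_
  rw [mul_assoc M, Real.mul_self_sqrt N.cast_nonneg, mul_comm M]

theorem trigEval_sub_trigEval {m : ℕ} (hU : U ∈ unitary (H →L[ℂ] H))
    (hV : V ∈ unitary (H →L[ℂ] H)) (hP : P.natDegree ≤ 2 * m)
    (hM : ∀ z, ‖z‖ = 1 → ‖P.eval z‖ ≤ M) (h : KyFanBound n (U - V) κ) :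
    KyFanBound n (trigEval m P U - trigEval m P V) (3 * m * M * κ) := by
  have hM₀ : 0 ≤ M := (norm_nonneg _).trans (hM 1 norm_one)
  have hκ := h.nonneg
  have poly_part := (aeval_sub_aeval hU hV hP hM h).mul_mul (star U ^ m) 1
  have shift_part := (aeval_sub_aeval hU hV (P := X ^ m) (M := 1) (natDegree_X_pow_le m)
    (by simp +contextual) h).mul_mul (-star U ^ m) (trigEval m P V)
  have unitary_pow : star U ^ m ∈ unitary (H →L[ℂ] H) := pow_mem (Unitary.star_mem hU) m
  have norm_star_pow : ‖star U ^ m‖ ≤ 1 := norm_le_one_of_mem_unitary unitary_pow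
  have decomp : trigEval m P U - trigEval m P V =
      star U ^ m * (aeval U P - aeval V P) * 1 +
        -star U ^ m * (aeval U (X ^ m : ℂ[X]) - aeval V (X ^ m : ℂ[X])) * trigEval m P V := by
    have cancel_U : star U ^ m * U ^ m = 1 := pow_mul_pow_eq_one m hU.1
    have cancel_V : V ^ m * star V ^ m = 1 := pow_mul_pow_eq_one m hV.2
    have cancel_VP : V ^ m * trigEval m P V = aeval V P := by
      rw [trigEval, ← mul_assoc, cancel_V, one_mul]
    simp only [map_pow, aeval_X, mul_sub, sub_mul, neg_mul, mul_one, cancel_U, one_mul, mul_assoc,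
      cancel_VP]
    rw [trigEval]
    abel
  rw [decomp]
  refine (poly_part.add shift_part).mono ?_
  calc _ ≤ 1 * 1 * ((2 * m : ℕ) * M * κ) + 1 * M * (m * 1 * κ) := by
        rw [norm_neg]
        gcongr
        exacts [norm_id_le, norm_trigEval_le hV hM m]
    _ = 3 * m * M * κ := by push_cast; ring

end KyFanBound

end OperatorBernstein

section UnitaryEstimate

theorem sum_two_pow_rpow_le {β : ℝ} (hβ : 0 < β) (K : ℕ) :
    ∑ k ∈ Finset.range K, ((2 : ℝ) ^ k) ^ β ≤ ((2 : ℝ) ^ K) ^ β / (2 ^ β - 1) := by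
  have ratio : 1 < (2 : ℝ) ^ β := Real.one_lt_rpow one_lt_two hβ
  simp only [← Real.rpow_pow_comm zero_le_two]
  rw [geom_sum_eq ratio.ne']
  gcongr
  linarith

theorem exists_two_pow_rpow_le {α κ : ℝ} (hα0 : 0 ≤ α) (hα1 : α < 1) (hκ : 0 < κ) :
    ∃ K : ℕ, ((2 : ℝ) ^ K) ^ (-α) ≤ 2 * κ ^ α ∧
      κ * ∑ k ∈ Finset.range K, ((2 : ℝ) ^ k) ^ (1 - α) ≤ κ ^ α / (2 ^ (1 - α) - 1) := by
  have ratio : 1 < (2 : ℝ) ^ (1 - α) := Real.one_lt_rpow one_lt_two (by linarith)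
  obtain hκ1 | hκ1 := le_total 1 κ
  · refine ⟨0, ?_, ?_⟩
    · simpa using (Real.one_le_rpow hκ1 hα0).trans (by linarith [Real.rpow_nonneg hκ.le α])
    · simpa using div_nonneg (Real.rpow_nonneg hκ.le α) (by linarith)
  obtain ⟨K, hK, hK'⟩ := exists_nat_pow_near ((one_le_inv₀ hκ).2 hκ1) (one_lt_two (α := ℝ))
  refine ⟨K, ?_, ?_⟩
  · have lower : (2 * κ)⁻¹ ≤ (2 : ℝ) ^ K := by
      rw [mul_inv, inv_mul_le_iff₀ two_pos, ← pow_succ']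
      exact hK'.le
    calc ((2 : ℝ) ^ K) ^ (-α) ≤ (2 * κ)⁻¹ ^ (-α) :=
          Real.rpow_le_rpow_of_nonpos (by positivity) lower (by linarith)
      _ = 2 ^ α * κ ^ α := by
          rw [Real.inv_rpow (by positivity), Real.rpow_neg (by positivity), inv_inv,
            Real.mul_rpow zero_le_two hκ.le]
      _ ≤ 2 ^ (1 : ℝ) * κ ^ α := by gcongr; exact one_le_two
      _ = 2 * κ ^ α := by rw [Real.rpow_one]
  · calc κ * ∑ k ∈ Finset.range K, ((2 : ℝ) ^ k) ^ (1 - α)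
        ≤ κ * (κ⁻¹ ^ (1 - α) / (2 ^ (1 - α) - 1)) := by
          gcongr
          refine (sum_two_pow_rpow_le (by linarith) K).trans ?_
          gcongr
      _ = κ ^ α / (2 ^ (1 - α) - 1) := by
          rw [Real.inv_rpow hκ.le, ← Real.rpow_neg hκ.le, ← mul_div_assoc, neg_sub,
            Real.rpow_sub_one hκ.ne', mul_div_cancel₀ _ hκ.ne']

variable {H : Type*} [NormedAddCommGroup H] [InnerProductSpace ℂ H] [CompleteSpace H]
  {U V : H →L[ℂ] H} {F : ℂ → ℂ} {κ : ℝ} {n : ℕ}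

theorem KyFanBound.trigEval_sub_trigEval_of_approx {m : ℕ → ℕ} {P : ℕ → ℂ[X]} {ε : ℕ → ℝ}
    (hm0 : m 0 = 0) (hm : Monotone m) (hε : Antitone ε) (hP : ∀ k, (P k).natDegree ≤ 2 * m k)
    (hF : ∀ k z, ‖z‖ = 1 → ‖F z - trigEval (m k) (P k) z‖ ≤ ε k)
    (hU : U ∈ unitary (H →L[ℂ] H)) (hV : V ∈ unitary (H →L[ℂ] H)) (h : KyFanBound n (U - V) κ)
    (K : ℕ) : KyFanBound n (trigEval (m K) (P K) U - trigEval (m K) (P K) V)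
      (6 * κ * ∑ k ∈ Finset.range K, m (k + 1) * ε k) := by
  induction K with
  | zero =>
    have constant : P 0 = C ((P 0).coeff 0) := eq_C_of_natDegree_le_zero (by simpa [hm0] using hP 0)
    rw [constant]
    simpa [trigEval, hm0] using KyFanBound.zero n
  | succ k ih =>
    obtain ⟨d, hd : m (k + 1) = m k + d⟩ := Nat.exists_eq_add_of_le (hm k.le_succ)
    set Q := P (k + 1) - X ^ d * P k
    have degree_Q : Q.natDegree ≤ 2 * m (k + 1) := by
      have := hP k
      refine (natDegree_sub_le_of_le (hP (k + 1)) (natDegree_mul_le_of_le (natDegree_X_pow_le d)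
        this)).trans (max_le le_rfl (by omega))
    have norm_Q : ∀ z, ‖z‖ = 1 → ‖Q.eval z‖ ≤ 2 * ε k := fun z hz ↦ by
      rw [← norm_trigEval_complex hz (m (k + 1)), hd,
        trigEval_sub_X_pow_mul (conj_mul_self_of_norm_eq_one hz), ← hd,
        ← sub_sub_sub_cancel_left _ _ (F z), two_mul]
      exact (norm_sub_le _ _).trans
        (add_le_add (hF k z hz) ((hF (k + 1) z hz).trans (hε k.le_succ)))
    have increment := trigEval_sub_trigEval hU hV degree_Q norm_Q h
    rw [hd, trigEval_sub_X_pow_mul hU.1, trigEval_sub_X_pow_mul hV.1, ← hd] at increment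
    convert ih.add increment using 1
    · abel
    · rw [Finset.sum_range_succ]
      ring

theorem exists_trigEval_dyadic_approx {L α : ℝ≥0} (hα : α ≤ 2)
    (hF : HolderOnWith L α F (Metric.sphere 0 1)) :
    ∃ P : ℕ → ℂ[X], ∀ k, (P k).natDegree ≤ 2 * (2 * (2 ^ k - 1)) ∧
      ∀ z, ‖z‖ = 1 → ‖F z - trigEval (2 * (2 ^ k - 1)) (P k) z‖ ≤
        9 * L * ((2 : ℝ) ^ k) ^ (-α : ℝ) := by
  choose P hdeg happrox using fun k ↦ exists_norm_sub_trigEval_le hα hF (2 ^ k - 1)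
  refine ⟨P, fun k ↦ ⟨(hdeg k).trans (by omega), fun z hz ↦ ?_⟩⟩
  simpa [Nat.cast_sub Nat.one_le_two_pow] using happrox k z hz

theorem KyFanBound.trigEval_dyadic_sub_trigEval_dyadic {L α : ℝ} (hL : 0 ≤ L) (hα : 0 ≤ α)
    {P : ℕ → ℂ[X]} (hP : ∀ k, (P k).natDegree ≤ 2 * (2 * (2 ^ k - 1)) ∧ ∀ z, ‖z‖ = 1 →
      ‖F z - trigEval (2 * (2 ^ k - 1)) (P k) z‖ ≤ 9 * L * ((2 : ℝ) ^ k) ^ (-α))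
    (hU : U ∈ unitary (H →L[ℂ] H)) (hV : V ∈ unitary (H →L[ℂ] H)) (h : KyFanBound n (U - V) κ)
    (K : ℕ) : KyFanBound n
      (trigEval (2 * (2 ^ K - 1)) (P K) U - trigEval (2 * (2 ^ K - 1)) (P K) V)
      (216 * L * κ * ∑ k ∈ Finset.range K, ((2 : ℝ) ^ k) ^ (1 - α)) := by
  have monotone_order : Monotone fun k ↦ 2 * (2 ^ k - 1) := fun a b hab ↦ by
    dsimp only
    gcongr
    exact one_le_two
  have antitone_error : Antitone fun k : ℕ ↦ 9 * L * ((2 : ℝ) ^ k) ^ (-α) := fun a b hab ↦ by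
    refine mul_le_mul_of_nonneg_left (Real.rpow_le_rpow_of_nonpos (by positivity) ?_ ?_)
      (by positivity)
    · gcongr
      exact one_le_two
    · linarith
  have hκ := h.nonneg
  refine (trigEval_sub_trigEval_of_approx (m := fun k ↦ 2 * (2 ^ k - 1)) (by simp) monotone_order
    antitone_error (fun k ↦ (hP k).1) (fun k ↦ (hP k).2) hU hV h K).mono ?_
  calc 6 * κ * ∑ k ∈ Finset.range K, ((2 * (2 ^ (k + 1) - 1) : ℕ) : ℝ) *
        (9 * L * ((2 : ℝ) ^ k) ^ (-α))
      ≤ 6 * κ * ∑ k ∈ Finset.range K, 4 * 2 ^ k * (9 * L * ((2 : ℝ) ^ k) ^ (-α)) := by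
        gcongr with k
        exact_mod_cast (by omega : 2 * (2 ^ (k + 1) - 1) ≤ 4 * 2 ^ k)
    _ = 216 * L * κ * ∑ k ∈ Finset.range K, ((2 : ℝ) ^ k) ^ (1 - α) := by
        have split_rpow (k : ℕ) : ((2 : ℝ) ^ k) ^ (1 - α) = 2 ^ k * (2 ^ k) ^ (-α) := by
          rw [sub_eq_add_neg, Real.rpow_add (by positivity), Real.rpow_one]
        simp only [split_rpow, Finset.mul_sum]
        exact Finset.sum_congr rfl fun k _ ↦ by ring

theorem norm_cfc_sub_trigEval_le {m : ℕ} {P : ℂ[X]} {ε : ℝ}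
    (hF : ContinuousOn F (Metric.sphere 0 1))
    (hP : ∀ z, ‖z‖ = 1 → ‖F z - trigEval m P z‖ ≤ ε) (hU : U ∈ unitary (H →L[ℂ] H)) :
    ‖cfc F U - trigEval m P U‖ ≤ ε := by
  have continuous_trigEval : Continuous (trigEval m P : ℂ → ℂ) := by
    unfold trigEval
    fun_prop
  rw [trigEval_eq_cfc hU, ← cfc_sub F _ U (hF.mono (spectrum.subset_circle_of_unitary hU))]
  exact norm_cfc_le_of_mem_unitary hU hP

theorem singularValue_cfc_sub_cfc_le_of_mem_unitary {L α : ℝ≥0} {j : ℕ} (hα0 : 0 < α)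
    (hα1 : α < 1) (hF : HolderOnWith L α F (Metric.sphere 0 1)) (hU : U ∈ unitary (H →L[ℂ] H))
    (hV : V ∈ unitary (H →L[ℂ] H)) (hκ : 0 < κ) (h : KyFanBound (j + 1) (U - V) ((j + 1) * κ)) :
    singularValue (cfc F U - cfc F V) j ≤
      (36 + 432 / ((2 : ℝ) ^ (1 - α : ℝ) - 1)) * L * κ ^ (α : ℝ) := by
  obtain ⟨P, hP⟩ := exists_trigEval_dyadic_approx (hα1.le.trans one_le_two) hF
  obtain ⟨K, error_le, sum_le⟩ := exists_two_pow_rpow_le α.coe_nonneg hα1 hκ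
  set g := fun W : H →L[ℂ] H ↦ trigEval (2 * (2 ^ K - 1)) (P K) W
  have near {W : H →L[ℂ] H} (hW : W ∈ unitary (H →L[ℂ] H)) :
      ‖cfc F W - g W‖ ≤ 9 * L * ((2 : ℝ) ^ K) ^ (-α : ℝ) :=
    norm_cfc_sub_trigEval_le (hF.continuousOn hα0) (hP K).2 hW
  have singularValue_g : singularValue (g U - g V) j ≤
      432 * L * (κ * ∑ k ∈ Finset.range K, ((2 : ℝ) ^ k) ^ (1 - α : ℝ)) := by
    refine le_of_mul_le_mul_left (a := (j : ℝ) + 1) ?_ (by positivity)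
    refine (KyFanBound.trigEval_dyadic_sub_trigEval_dyadic L.coe_nonneg α.coe_nonneg hP hU hV h
      K).singularValue_le.trans_eq ?_
    ring
  calc singularValue (cfc F U - cfc F V) j
      = singularValue (g U - g V + ((cfc F U - g U) - (cfc F V - g V))) j := by congr 1; abel
    _ ≤ singularValue (g U - g V) j + ‖(cfc F U - g U) - (cfc F V - g V)‖ :=
        singularValue_add_le ..
    _ ≤ 432 * L * (κ * ∑ k ∈ Finset.range K, ((2 : ℝ) ^ k) ^ (1 - α : ℝ)) +
          (9 * L * ((2 : ℝ) ^ K) ^ (-α : ℝ) + 9 * L * ((2 : ℝ) ^ K) ^ (-α : ℝ)) :=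
        add_le_add singularValue_g ((norm_sub_le _ _).trans (add_le_add (near hU) (near hV)))
    _ ≤ 432 * L * (κ ^ (α : ℝ) / (2 ^ (1 - α : ℝ) - 1)) +
          (9 * L * (2 * κ ^ (α : ℝ)) + 9 * L * (2 * κ ^ (α : ℝ))) := by gcongr
    _ = _ := by ring

end UnitaryEstimate

section Resolvent

variable {A : Type*} [CStarAlgebra A] {a : A} {w : ℂ}

theorem mem_resolventSet_of_im_ne_zero (ha : IsSelfAdjoint a) (hw : w.im ≠ 0) :
    w ∈ resolventSet ℂ a :=
  not_not.1 fun h : w ∈ spectrum ℂ a ↦ hw (ha.im_eq_zero_of_mem_spectrum h)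

theorem resolvent_eq_cfc [IsStarNormal a] (hw : w ∈ resolventSet ℂ a) :
    resolvent a w = cfc (fun z ↦ (w - z)⁻¹) a := by
  have ne_zero : ∀ z ∈ spectrum ℂ a, w - z ≠ 0 := fun z hz h ↦ hz (sub_eq_zero.1 h ▸ hw)
  rw [cfc_inv (fun z ↦ w - z) a ne_zero, cfc_sub .., cfc_const .., cfc_id' .., resolvent]

theorem norm_resolvent_le_inv_abs_im (ha : IsSelfAdjoint a) (hw : w.im ≠ 0) :
    ‖resolvent a w‖ ≤ |w.im|⁻¹ := by
  have := ha.isStarNormal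
  rw [resolvent_eq_cfc (mem_resolventSet_of_im_ne_zero ha hw)]
  refine norm_cfc_le (by positivity) fun z hz ↦ ?_
  rw [norm_inv]
  gcongr
  simpa [ha.im_eq_zero_of_mem_spectrum hz] using Complex.abs_im_le_norm (w - z)

end Resolvent

section Cayley

/-- The Cayley transform with scale `l`, which maps the real line into the unit circle. -/
noncomputable def cayley (l : ℝ) (z : ℂ) : ℂ :=
  (z - l * Complex.I) / (z + l * Complex.I)

/-- A Lipschitz function on the unit circle which, up to the factor `l`, inverts `cayley l` on
`[-l, l]`. The full inverse is `-im z / (1 - re z)`; the image of `[-l, l]` is the half circle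
`re z ≤ 0`, so the denominator may be truncated at `1`. -/
noncomputable def truncatedCayleyInv (z : ℂ) : ℝ :=
  -z.im / max (1 - z.re) 1

variable {l : ℝ}

theorem cayley_eq_one_add {z : ℂ} (hz : z ≠ -(l * Complex.I)) :
    cayley l z = 1 + 2 * l * Complex.I * (-(l * Complex.I) - z)⁻¹ := by
  have : z + l * Complex.I ≠ 0 := fun h ↦ hz (eq_neg_of_add_eq_zero_left h)
  have : -(l * Complex.I) - z ≠ 0 := sub_ne_zero.2 hz.symm
  rw [cayley]
  field_simp
  ring

theorem ofReal_add_mul_I_ne_zero (hl : l ≠ 0) (x : ℝ) : (x : ℂ) + l * Complex.I ≠ 0 :=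
  fun h ↦ hl (by simpa using congrArg Complex.im h)

theorem norm_cayley_ofReal (hl : l ≠ 0) (x : ℝ) : ‖cayley l x‖ = 1 := by
  have conj_denom : conj (x + l * Complex.I) = x - l * Complex.I := by simp [sub_eq_add_neg]
  have denom_ne_zero := ofReal_add_mul_I_ne_zero hl x
  rw [cayley, norm_div, ← conj_denom, RCLike.norm_conj, div_self (norm_ne_zero_iff.2 denom_ne_zero)]

theorem cayley_ofReal (hl : l ≠ 0) (x : ℝ) :
    cayley l x = ⟨(x ^ 2 - l ^ 2) / (x ^ 2 + l ^ 2), -(2 * l * x) / (x ^ 2 + l ^ 2)⟩ := by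
  have denom_ne_zero := ofReal_add_mul_I_ne_zero hl x
  have : x ^ 2 + l ^ 2 ≠ 0 := by positivity
  rw [cayley, div_eq_iff denom_ne_zero]
  apply Complex.ext
  · simp only [Complex.sub_re, Complex.add_re, Complex.add_im, Complex.mul_re, Complex.mul_im,
      Complex.ofReal_re, Complex.ofReal_im, Complex.I_re, Complex.I_im]
    field_simp
    ring
  · simp only [Complex.sub_im, Complex.add_re, Complex.add_im, Complex.mul_re, Complex.mul_im,
      Complex.ofReal_re, Complex.ofReal_im, Complex.I_re, Complex.I_im]
    field_simp
    ring

theorem mul_truncatedCayleyInv_cayley (hl : 0 < l) {x : ℝ} (hx : |x| ≤ l) :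
    l * truncatedCayleyInv (cayley l x) = x := by
  have sq_le : x ^ 2 ≤ l ^ 2 := sq_le_sq.2 (hx.trans (le_abs_self l))
  have cayley_re : 1 - (cayley l x).re = 2 * l ^ 2 / (x ^ 2 + l ^ 2) := by
    rw [cayley_ofReal hl.ne']
    change 1 - (x ^ 2 - l ^ 2) / (x ^ 2 + l ^ 2) = _
    field_simp
    ring
  have cayley_im : (cayley l x).im = -(2 * l * x) / (x ^ 2 + l ^ 2) := by
    rw [cayley_ofReal hl.ne']
  have one_le : 1 ≤ 1 - (cayley l x).re := by
    rw [cayley_re, one_le_div (by positivity)]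
    linarith
  rw [truncatedCayleyInv, max_eq_left one_le, cayley_re, cayley_im]
  field_simp

theorem lipschitzOnWith_truncatedCayleyInv :
    LipschitzOnWith 2 truncatedCayleyInv (Metric.sphere 0 1) := by
  refine LipschitzOnWith.of_dist_le_mul fun z _ w hw ↦ ?_
  rw [Real.dist_eq, dist_eq_norm, NNReal.coe_ofNat]
  unfold truncatedCayleyInv
  set m := max (1 - z.re) 1
  set n := max (1 - w.re) 1
  have hm : 1 ≤ m := le_max_right _ _
  have hn : 1 ≤ n := le_max_right _ _
  have denom_le : |m - n| ≤ ‖z - w‖ := calc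
    |m - n| ≤ |(1 - z.re) - (1 - w.re)| := abs_max_sub_max_le_abs _ _ _
    _ = |(z - w).re| := by rw [sub_sub_sub_cancel_left, abs_sub_comm, Complex.sub_re]
    _ ≤ ‖z - w‖ := Complex.abs_re_le_norm _
  have num_le : |z.im - w.im| ≤ ‖z - w‖ := by
    simpa only [Complex.sub_im] using Complex.abs_im_le_norm (z - w)
  have quotient_le : |w.im / n| ≤ 1 := by
    rw [abs_div, abs_of_pos (by linarith : 0 < n)]
    refine div_le_one_of_le₀ ((Complex.abs_im_le_norm w).trans ?_) (by linarith)
    rwa [mem_sphere_zero_iff_norm.1 hw]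
  calc |-z.im / m - -w.im / n| = |w.im / n * (m - n) - (z.im - w.im)| / m := by
        rw [← abs_of_pos (by linarith : 0 < m), ← abs_div, abs_of_pos (by linarith : 0 < m)]
        congr 1
        field_simp
        ring
    _ ≤ |w.im / n * (m - n) - (z.im - w.im)| := div_le_self (abs_nonneg _) hm
    _ ≤ |w.im / n| * |m - n| + |z.im - w.im| := by
        rw [← abs_mul]
        exact abs_sub _ _
    _ ≤ 1 * ‖z - w‖ + ‖z - w‖ := by gcongr
    _ = 2 * ‖z - w‖ := by ring

variable {A : Type*} [CStarAlgebra A] {a b : A}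

theorem norm_cayley_of_mem_spectrum (ha : IsSelfAdjoint a) (hl : l ≠ 0) {z : ℂ}
    (hz : z ∈ spectrum ℂ a) : ‖cayley l z‖ = 1 := by
  rw [ha.mem_spectrum_eq_re hz]
  exact norm_cayley_ofReal hl z.re

theorem ne_neg_mul_I_of_mem_spectrum (ha : IsSelfAdjoint a) (hl : l ≠ 0) {z : ℂ}
    (hz : z ∈ spectrum ℂ a) : z ≠ -(l * Complex.I) := by
  rintro rfl
  exact hl (by simpa using ha.im_eq_zero_of_mem_spectrum hz)

theorem continuousOn_cayley_spectrum (ha : IsSelfAdjoint a) (hl : l ≠ 0) :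
    ContinuousOn (cayley l) (spectrum ℂ a) := by
  refine ContinuousOn.div (by fun_prop) (by fun_prop) fun z hz h ↦ ?_
  exact ne_neg_mul_I_of_mem_spectrum ha hl hz (eq_neg_of_add_eq_zero_left h)

theorem cfc_cayley_mem_unitary (ha : IsSelfAdjoint a) (hl : l ≠ 0) :
    cfc (cayley l) a ∈ unitary A :=
  (cfc_unitary_iff (cayley l) a ha.isStarNormal (continuousOn_cayley_spectrum ha hl)).2
    fun _ hz ↦ conj_mul_self_of_norm_eq_one (norm_cayley_of_mem_spectrum ha hl hz)

theorem cfc_cayley_eq_one_add_resolvent (ha : IsSelfAdjoint a) (hl : l ≠ 0) :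
    cfc (cayley l) a = 1 + (2 * l * Complex.I) • resolvent a (-(l * Complex.I)) := by
  have := ha.isStarNormal
  have ne_zero : ∀ z ∈ spectrum ℂ a, -(l * Complex.I) - z ≠ 0 := fun z hz ↦
    sub_ne_zero.2 (ne_neg_mul_I_of_mem_spectrum ha hl hz).symm
  have cont : ContinuousOn (fun z ↦ (-(l * Complex.I) - z)⁻¹) (spectrum ℂ a) :=
    ContinuousOn.inv₀ (by fun_prop) ne_zero
  rw [cfc_congr fun z hz ↦ cayley_eq_one_add (ne_neg_mul_I_of_mem_spectrum ha hl hz),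
    cfc_add a (fun _ ↦ 1) (fun z ↦ 2 * l * Complex.I * (-(l * Complex.I) - z)⁻¹)
      continuousOn_const (continuousOn_const.mul cont), cfc_const_one ℂ a,
    cfc_const_mul _ _ a cont, resolvent_eq_cfc]
  exact mem_resolventSet_of_im_ne_zero ha (by simpa using hl)

theorem cfc_cayley_sub_cfc_cayley (ha : IsSelfAdjoint a) (hb : IsSelfAdjoint b) (hl : l ≠ 0) :
    cfc (cayley l) a - cfc (cayley l) b = (2 * l * Complex.I) •
      resolvent a (-(l * Complex.I)) * (a - b) * resolvent b (-(l * Complex.I)) := by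
  have him : (-(l * Complex.I)).im ≠ 0 := by simpa using hl
  rw [cfc_cayley_eq_one_add_resolvent ha hl, cfc_cayley_eq_one_add_resolvent hb hl,
    add_sub_add_left_eq_sub, ← smul_sub, spectrum.resolvent_sub_resolvent
      (mem_resolventSet_of_im_ne_zero ha him) (mem_resolventSet_of_im_ne_zero hb him),
    smul_mul_assoc, smul_mul_assoc]

theorem cfc_eq_cfc_cfc_cayley {f : ℝ → ℝ} (hf : Continuous f) (ha : IsSelfAdjoint a) (hl : 0 < l)
    (hal : ‖a‖ ≤ l) :
    cfc f a = cfc (fun z ↦ (f (l * truncatedCayleyInv z) : ℂ)) (cfc (cayley l) a) := by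
  have image_subset : cayley l '' spectrum ℂ a ⊆ Metric.sphere 0 1 := by
    rintro _ ⟨z, hz, rfl⟩
    exact mem_sphere_zero_iff_norm.2 (norm_cayley_of_mem_spectrum ha hl.ne' hz)
  have continuousOn_inv := lipschitzOnWith_truncatedCayleyInv.continuousOn.mono image_subset
  rw [cfc_real_eq_complex f ha, ← cfc_comp _ _ a ha.isStarNormal (by fun_prop)
    (continuousOn_cayley_spectrum ha hl.ne')]
  refine cfc_congr fun z hz ↦ ?_
  have norm_le : ‖z‖ ≤ ‖a‖ := (spectrum.norm_le_norm_mul_of_mem hz).trans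
    (mul_le_of_le_one_right (norm_nonneg a) (norm_le_one_of_mem_unitary (one_mem _)))
  have abs_re_le : |z.re| ≤ l := (Complex.abs_re_le_norm z).trans (norm_le.trans hal)
  have hz_re := ha.mem_spectrum_eq_re hz
  simp only [Function.comp_apply]
  conv_rhs => rw [hz_re, mul_truncatedCayleyInv_cayley hl abs_re_le]

end Cayley

section PointwiseEstimate

variable {H : Type*} [NormedAddCommGroup H] [InnerProductSpace ℂ H] [CompleteSpace H]
  {A B : H →L[ℂ] H}

theorem KyFanBound.cfc_cayley_sub_cfc_cayley {n : ℕ} {κ l : ℝ} (hA : IsSelfAdjoint A)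
    (hB : IsSelfAdjoint B) (hl : 0 < l) (h : KyFanBound n (A - B) κ) :
    KyFanBound n (cfc (cayley l) A - cfc (cayley l) B) (2 * κ / l) := by
  have norm_resolvent {T : H →L[ℂ] H} (hT : IsSelfAdjoint T) :
      ‖resolvent T (-(l * Complex.I))‖ ≤ l⁻¹ := by
    simpa [abs_of_pos hl] using
      norm_resolvent_le_inv_abs_im hT (w := -(l * Complex.I)) (by simpa using hl.ne')
  have hκ := h.nonneg
  rw [_root_.cfc_cayley_sub_cfc_cayley hA hB hl.ne']
  refine (h.mul_mul _ _).mono ?_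
  calc ‖(2 * l * Complex.I) • resolvent A (-(l * Complex.I))‖ *
        ‖resolvent B (-(l * Complex.I))‖ * κ ≤ 2 * l * l⁻¹ * l⁻¹ * κ := by
        rw [norm_smul]
        gcongr
        exacts [by simp [abs_of_pos hl], norm_resolvent hA, norm_resolvent hB]
    _ = 2 * κ / l := by field_simp

theorem holderOnWith_comp_truncatedCayleyInv {f : ℝ → ℝ} {C α : ℝ≥0} (hf : HolderWith C α f)
    (l : ℝ≥0) : HolderOnWith (C * (l * 2) ^ (α : ℝ)) α
      (fun z ↦ (f (l * truncatedCayleyInv z) : ℂ)) (Metric.sphere 0 1) := by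
  have scaled : LipschitzOnWith (l * 2) (fun z ↦ (l : ℝ) * truncatedCayleyInv z)
      (Metric.sphere 0 1) := by
    simpa [Function.comp_def] using
      (lipschitzWith_smul (l : ℝ)).comp_lipschitzOnWith lipschitzOnWith_truncatedCayleyInv
  have comp := (holderWith_one.2 Complex.isometry_ofReal.lipschitz).comp_holderOnWith
    (hf.comp_holderOnWith (holderOnWith_one.2 scaled))
  simpa [Function.comp_def] using comp

theorem singularValue_cfc_sub_cfc_le_of_kyFanBound {f : ℝ → ℝ} {C α : ℝ≥0} (hα0 : 0 < α)
    (hα1 : α < 1) (hf : HolderWith C α f) (hA : IsSelfAdjoint A) (hB : IsSelfAdjoint B) {j : ℕ}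
    {κ : ℝ} (hκ : 0 < κ) (h : KyFanBound (j + 1) (A - B) ((j + 1) * κ)) :
    singularValue (cfc f A - cfc f B) j ≤
      (36 + 432 / ((2 : ℝ) ^ (1 - α : ℝ) - 1)) * C * (4 * κ) ^ (α : ℝ) := by
  obtain ⟨l, hl, norm_A_le, norm_B_le⟩ : ∃ l : ℝ≥0, 0 < (l : ℝ) ∧ ‖A‖ ≤ l ∧ ‖B‖ ≤ l :=
    ⟨‖A‖₊ + ‖B‖₊ + 1, by positivity, by simpa [add_assoc] using by positivity,
      by simpa [add_right_comm] using by positivity⟩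
  have cayley_bound : KyFanBound (j + 1) (cfc (cayley l) A - cfc (cayley l) B)
      ((j + 1) * (2 * κ / l)) :=
    (h.cfc_cayley_sub_cfc_cayley hA hB hl).mono (le_of_eq (by ring))
  have scale_cancel : ((l : ℝ) * 2) ^ (α : ℝ) * (2 * κ / l) ^ (α : ℝ) = (4 * κ) ^ (α : ℝ) := by
    rw [← Real.mul_rpow (by positivity) (by positivity)]
    congr 1
    field_simp
    ring
  have hcont := hf.continuous hα0
  have hU : cfc (cayley l) A ∈ unitary (H →L[ℂ] H) := cfc_cayley_mem_unitary hA hl.ne'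
  have hV : cfc (cayley l) B ∈ unitary (H →L[ℂ] H) := cfc_cayley_mem_unitary hB hl.ne'
  have hF := holderOnWith_comp_truncatedCayleyInv hf l
  rw [cfc_eq_cfc_cfc_cayley hcont hA hl norm_A_le, cfc_eq_cfc_cfc_cayley hcont hB hl norm_B_le]
  refine (singularValue_cfc_sub_cfc_le_of_mem_unitary hα0 hα1 hF hU hV (by positivity)
    cayley_bound).trans_eq ?_
  rw [← scale_cancel]
  push_cast
  ring

theorem singularValue_cfc_sub_cfc_le {f : ℝ → ℝ} {C α : ℝ≥0} (hα0 : 0 < α) (hα1 : α < 1)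
    (hf : HolderWith C α f) (hA : IsSelfAdjoint A) (hB : IsSelfAdjoint B) (j : ℕ) :
    singularValue (cfc f A - cfc f B) j ≤
      (36 + 432 / ((2 : ℝ) ^ (1 - α : ℝ) - 1)) * C * 96 ^ (α : ℝ) *
        ((∑ m ∈ Finset.range (j + 1), singularValue (A - B) m) / (j + 1)) ^ (α : ℝ) := by
  obtain rfl | hAB := eq_or_ne A B
  · have mean_nonneg :
        0 ≤ (∑ m ∈ Finset.range (j + 1), singularValue (A - A) m) / ((j : ℝ) + 1) :=
      div_nonneg (Finset.sum_nonneg fun m _ ↦ singularValue_nonneg _ m) (by positivity)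
    have : (0 : ℝ) ≤ 2 ^ (1 - α : ℝ) - 1 :=
      sub_nonneg.2 (Real.one_le_rpow one_le_two (by simpa using hα1.le))
    calc singularValue (cfc f A - cfc f A) j ≤ singularValue (cfc f A - cfc f A) 0 :=
          singularValue_antitone _ j.zero_le
      _ = 0 := by rw [singularValue_zero, sub_self, norm_zero]
      _ ≤ _ := by positivity
  have sum_pos : 0 < ∑ m ∈ Finset.range (j + 1), singularValue (A - B) m := by
    refine (norm_sub_pos_iff.2 hAB).trans_le ?_
    rw [← singularValue_zero]
    exact Finset.single_le_sum (fun m _ ↦ singularValue_nonneg (A - B) m) (by simp)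
  have kyFan : KyFanBound (j + 1) (A - B)
      ((j + 1) * (24 * ((∑ m ∈ Finset.range (j + 1), singularValue (A - B) m) / (j + 1)))) :=
    (kyFanBound_sum_singularValue (A - B) (j + 1)).mono (le_of_eq (by field_simp))
  refine (singularValue_cfc_sub_cfc_le_of_kyFanBound hα0 hα1 hf hA hB (by positivity)
    kyFan).trans_eq ?_
  rw [← mul_assoc, Real.mul_rpow (by norm_num) (by positivity), ← mul_assoc]
  norm_num

end PointwiseEstimate

section Hardy

variable {p : ℝ}

theorem rpow_sub_one_mul_le {a b : ℝ} (hp : 1 < p) (ha : 0 ≤ a) (hb : 0 ≤ b) :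
    p * (a ^ (p - 1) * b) ≤ (p - 1) * a ^ p + b ^ p := by
  have hp1 : 0 < p - 1 := sub_pos.2 hp
  have young := Real.young_inequality_of_nonneg (Real.rpow_nonneg ha (p - 1)) hb
    (Real.HolderConjugate.conjExponent hp).symm
  rw [Real.conjExponent, ← Real.rpow_mul ha, mul_div_cancel₀ _ hp1.ne'] at young
  calc p * (a ^ (p - 1) * b) ≤ p * (a ^ p / (p / (p - 1)) + b ^ p / p) := by gcongr
    _ = (p - 1) * a ^ p + b ^ p := by field_simp

/- Young's inequality is applied to `a ^ (p - 1) * b` and to `a ^ (p - 1) * (p / (p - 1) * s)`;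
the differences in the conclusion telescope when `a` and `b` are consecutive means. -/
theorem rpow_le_add_telescoping {a b s t : ℝ} (hp : 1 < p) (ha : 0 ≤ a) (hb : 0 ≤ b) (hs : 0 ≤ s)
    (ht : 0 ≤ t) (h : (t + 1) * a = t * b + s) :
    a ^ p ≤ (p / (p - 1)) ^ p * s ^ p + p / (p - 1) * (t * b ^ p - (t + 1) * a ^ p) := by
  have hp1 : 0 < p - 1 := sub_pos.2 hp
  set q := p / (p - 1)
  have hq : 0 < q := by positivity
  have young_b := mul_le_mul_of_nonneg_left (rpow_sub_one_mul_le hp ha hb) (mul_nonneg hq.le ht)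
  have young_s := rpow_sub_one_mul_le hp ha (mul_nonneg hq.le hs)
  rw [Real.mul_rpow hq.le hs] at young_s
  have rpow_eq : a ^ (p - 1) * a = a ^ p := by
    rw [← Real.rpow_add_one' ha (by linarith), sub_add_cancel]
  have mul_q : (p - 1) * q = p := mul_div_cancel₀ _ hp1.ne'
  have expand : p * (a ^ (p - 1) * (q * s)) + q * t * (p * (a ^ (p - 1) * b)) =
      p * q * ((t + 1) * a ^ p) := by
    rw [← rpow_eq]
    linear_combination (-p * q * a ^ (p - 1)) * h
  linear_combination young_b + young_s - expand - a ^ p * mul_q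

theorem sum_range_mean_rpow_le {s : ℕ → ℝ} (hp : 1 < p) (hs : ∀ i, 0 ≤ s i) (n : ℕ) :
    ∑ j ∈ Finset.range n, ((∑ m ∈ Finset.range (j + 1), s m) / (j + 1)) ^ p ≤
      (p / (p - 1)) ^ p * ∑ j ∈ Finset.range n, s j ^ p := by
  have : 0 < p - 1 := sub_pos.2 hp
  set σ : ℕ → ℝ := fun j ↦ (∑ m ∈ Finset.range (j + 1), s m) / (j + 1)
  have σ_nonneg (j : ℕ) : 0 ≤ σ j :=
    div_nonneg (Finset.sum_nonneg fun i _ ↦ hs i) (by positivity)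
  have mul_σ (j : ℕ) : (j + 1 : ℝ) * σ j = ∑ m ∈ Finset.range (j + 1), s m :=
    mul_div_cancel₀ _ (by positivity)
  have σ_recurrence (n : ℕ) : (n + 1 : ℝ) * σ n = n * σ (n - 1) + s n := by
    rw [mul_σ, Finset.sum_range_succ]
    cases n with
    | zero => simp
    | succ n => rw [Nat.add_sub_cancel, Nat.cast_add_one, mul_σ]
  have strengthened : ∑ j ∈ Finset.range n, σ j ^ p ≤
      (p / (p - 1)) ^ p * ∑ j ∈ Finset.range n, s j ^ p -
        p / (p - 1) * (n * σ (n - 1) ^ p) := by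
    induction n with
    | zero => simp
    | succ n ih =>
      have step := rpow_le_add_telescoping hp (σ_nonneg n) (σ_nonneg (n - 1)) (hs n)
        n.cast_nonneg (σ_recurrence n)
      rw [Finset.sum_range_succ, Finset.sum_range_succ, Nat.add_sub_cancel, Nat.cast_add_one]
      linarith
  have := Real.rpow_nonneg (σ_nonneg (n - 1)) p
  exact strengthened.trans (sub_le_self _ (by positivity))

theorem summable_rpow_and_tsum_rpow_le_of_le_mean_rpow {s t : ℕ → ℝ} {α D : ℝ} (hα : 0 < α)
    (hp : 1 < p) (hD : 0 ≤ D) (hs : ∀ j, 0 ≤ s j) (ht : ∀ j, 0 ≤ t j)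
    (hts : ∀ j : ℕ, t j ≤ D * ((∑ m ∈ Finset.range (j + 1), s m) / (j + 1)) ^ α)
    (hsum : Summable fun j ↦ s j ^ p) :
    Summable (fun j ↦ t j ^ (p / α)) ∧
      (∑' j, t j ^ (p / α)) ^ (α / p) ≤
        D * (p / (p - 1)) ^ α * (∑' j, s j ^ p) ^ (α / p) := by
  have : 0 < p - 1 := sub_pos.2 hp
  have hp0 : 0 < p := one_pos.trans hp
  have term_le (j : ℕ) : t j ^ (p / α) ≤
      D ^ (p / α) * ((∑ m ∈ Finset.range (j + 1), s m) / (j + 1)) ^ p := by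
    have mean_nonneg : 0 ≤ (∑ m ∈ Finset.range (j + 1), s m) / (j + 1 : ℝ) :=
      div_nonneg (Finset.sum_nonneg fun i _ ↦ hs i) (by positivity)
    refine (Real.rpow_le_rpow (ht j) (hts j) (by positivity)).trans_eq ?_
    rw [Real.mul_rpow hD (by positivity), ← Real.rpow_mul mean_nonneg, mul_div_cancel₀ _ hα.ne']
  have sum_le (n : ℕ) : ∑ j ∈ Finset.range n, t j ^ (p / α) ≤
      D ^ (p / α) * ((p / (p - 1)) ^ p * ∑' j, s j ^ p) := by
    refine (Finset.sum_le_sum fun j _ ↦ term_le j).trans ?_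
    rw [← Finset.mul_sum]
    gcongr
    refine (sum_range_mean_rpow_le hp hs n).trans ?_
    gcongr
    exact hsum.sum_le_tsum _ fun j _ ↦ Real.rpow_nonneg (hs j) p
  have rpow_nonneg (j : ℕ) : 0 ≤ t j ^ (p / α) := Real.rpow_nonneg (ht j) _
  have total_nonneg : 0 ≤ ∑' j, s j ^ p := tsum_nonneg fun j ↦ Real.rpow_nonneg (hs j) p
  refine ⟨summable_of_sum_range_le rpow_nonneg sum_le, ?_⟩
  refine (Real.rpow_le_rpow (tsum_nonneg rpow_nonneg)
    (Real.tsum_le_of_sum_range_le rpow_nonneg sum_le) (by positivity)).trans_eq ?_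
  rw [Real.mul_rpow (by positivity) (by positivity), Real.mul_rpow (by positivity) total_nonneg,
    ← Real.rpow_mul hD, ← Real.rpow_mul (by positivity), div_mul_div_cancel₀ hα.ne',
    div_self hp0.ne', Real.rpow_one, mul_div_cancel₀ _ hp0.ne', mul_assoc]

end Hardy

theorem holderWith_of_abs_sub_le {f : ℝ → ℝ} {C α : ℝ≥0}
    (hf : ∀ x y : ℝ, |f x - f y| ≤ C * |x - y| ^ (α : ℝ)) : HolderWith C α f := fun x y ↦ by
  simp only [edist_nndist]
  rw [← ENNReal.coe_rpow_of_nonneg _ α.coe_nonneg]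
  exact_mod_cast hf x y

/-- Aleksandrov–Peller: for `0 < α < 1`, `1 < p < ∞` and `f` in the Hölder class `Λ_α`
with seminorm at most `C`, if `A − B ∈ S_p` then `f(A) − f(B) ∈ S_{p/α}` and
`‖f(A) − f(B)‖_{S_{p/α}} ≤ c·C·‖A − B‖_{S_p}^α` with `c = c(α, p)`. -/
theorem schatten_holder_estimate
    (α p : ℝ) (hα0 : 0 < α) (hα1 : α < 1) (hp1 : 1 < p) :
    ∃ c : ℝ, 0 < c ∧
      ∀ (H : Type*) [NormedAddCommGroup H] [InnerProductSpace ℂ H] [CompleteSpace H],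
      ∀ (f : ℝ → ℝ) (C : ℝ), (∀ x y : ℝ, |f x - f y| ≤ C * |x - y| ^ α) →
      ∀ (A B : H →L[ℂ] H), IsSelfAdjoint A → IsSelfAdjoint B →
        Summable (fun j : ℕ => singularValue (A - B) j ^ p) →
        Summable (fun j : ℕ => singularValue (cfc f A - cfc f B) j ^ (p / α)) ∧
        (∑' j : ℕ, singularValue (cfc f A - cfc f B) j ^ (p / α)) ^ (α / p)
          ≤ c * C * (∑' j : ℕ, singularValue (A - B) j ^ p) ^ (α / p) := by
  have : 0 < (2 : ℝ) ^ (1 - α) - 1 :=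
    sub_pos.2 (Real.one_lt_rpow one_lt_two (sub_pos.2 hα1))
  have : 0 < p - 1 := sub_pos.2 hp1
  refine ⟨(36 + 432 / (2 ^ (1 - α) - 1)) * 96 ^ α * (p / (p - 1)) ^ α, by positivity,
    fun H _ _ _ f C hf A B hA hB hsum ↦ ?_⟩
  have hC : 0 ≤ C := by simpa using (abs_nonneg _).trans (hf 1 0)
  lift C to ℝ≥0 using hC
  lift α to ℝ≥0 using hα0.le
  have pointwise := singularValue_cfc_sub_cfc_le (NNReal.coe_pos.1 hα0) (NNReal.coe_lt_one.1 hα1)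
    (holderWith_of_abs_sub_le hf) hA hB
  obtain ⟨summable, le⟩ := summable_rpow_and_tsum_rpow_le_of_le_mean_rpow hα0 hp1 (by positivity)
    (singularValue_nonneg (A - B)) (singularValue_nonneg (cfc f A - cfc f B)) pointwise hsum
  exact ⟨summable, le.trans_eq (by ring)⟩
end
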